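/- arXiv:2004.04879 — 9 statements merged into one kernel-verified Lean document; each statement's English description precedes it below -/
import Mathlib

section
/- Let (T, τ) be a topological space. Say that a net (x_α)_{α∈A} in T sτ-converges to x ∈ T if for every subnet (x_{φ(β)})_{β∈B} of (x_α)_{α∈A} there exists a sequence (β_n)_{n∈ℕ} in B such that the sequence (x_{φ(β_n)})_{n∈ℕ} converges to x in τ. Then the following are equivalent: (i) for every net (x_α)_{α∈A} in T and every x ∈ T, the net converges to x in τ if and only if it sτ-converges to x; (ii) for every subset S ⊆ T and every x in the τ-closure of S there exists a sequence (x_n) of elements of S converging to x in τ (i.e., (T, τ) is a Fréchet–Urysohn space). -/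
/-!
If nets converge exactly when they sτ-converge and `l ∈ closure S`, the net of pairs `(U, y)` with
`U` an open neighbourhood of `l` and `y ∈ U ∩ S`, ordered by reverse inclusion of the sets `U` and
evaluated by `(U, y) ↦ y`, converges to `l`. It is a subnet of itself, so sτ-convergence extracts
from it a sequence in `S` converging to `l`.

Conversely, let `T` be Fréchet–Urysohn. Every subnet of a convergent net converges, so the limit
lies in the closure of the range of the subnet and is the limit of a sequence in that range. If a
net does not converge to `l`, some open `U ∋ l` is left along a cofinal set of indices. A cofinal
subset of a directed set is directed, so this gives a subnet in `Uᶜ`, none of whose sequences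
converges to `l`.
-/

universe u v

/-- Convergence of a net `(x a)_{a ∈ A}` to `l` in a topological space:
for every open `U` containing `l` there exists `a₀` with `x a ∈ U` for all `a ≥ a₀`. -/
def NetConv {T : Type u} [TopologicalSpace T] {A : Type v} [Preorder A]
    (x : A → T) (l : T) : Prop :=
  ∀ U : Set T, IsOpen U → l ∈ U → ∃ a₀ : A, ∀ a, a₀ ≤ a → x a ∈ U

/-- sτ-convergence: for every subnet `(x (φ b))_{b ∈ B}` of the net `(x a)_{a ∈ A}`
(with `B` a nonempty directed preordered set and `φ` monotone and cofinal)
there exists a sequence `(s n)` in `B` such that the sequence `(x (φ (s n)))_{n ∈ ℕ}`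
converges to `l`. -/
def STauConv {T : Type u} [TopologicalSpace T] {A : Type u} [Preorder A]
    (x : A → T) (l : T) : Prop :=
  ∀ (B : Type u) [Preorder B], Nonempty B → IsDirected B (· ≤ ·) →
    ∀ φ : B → A, Monotone φ →
      (∀ a : A, ∃ b : B, ∀ b', b ≤ b' → a ≤ φ b') →
      ∃ s : ℕ → B, NetConv (fun n => x (φ (s n))) l

/-- The pairs `(U, y)` with `U` an open neighbourhood of `l` and `y ∈ U ∩ S`. -/
def NhdPoint {T : Type u} [TopologicalSpace T] (S : Set T) (l : T) : Type u :=
  {p : Set T × T // IsOpen p.1 ∧ l ∈ p.1 ∧ p.2 ∈ p.1 ∧ p.2 ∈ S}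

/-- Reverse inclusion of the neighbourhoods; the points are ignored, so this is only a preorder. -/
instance {T : Type u} [TopologicalSpace T] (S : Set T) (l : T) : Preorder (NhdPoint S l) where
  le p q := q.1.1 ⊆ p.1.1
  le_refl _ := subset_rfl
  le_trans _ _ _ hpq hqr := hqr.trans hpq

theorem exists_seq_of_netConv_imp_sTauConv {T : Type u} [TopologicalSpace T]
    (h : ∀ (A : Type u) [Preorder A], Nonempty A → IsDirected A (· ≤ ·) →
      ∀ (x : A → T) (l : T), NetConv x l → STauConv x l)
    (S : Set T) (l : T) (hl : l ∈ closure S) :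
    ∃ s : ℕ → T, (∀ n, s n ∈ S) ∧ NetConv s l := by
  have key : ∀ U : Set T, IsOpen U → l ∈ U → ∃ p : NhdPoint S l, p.1.1 = U := by
    intro U hU hlU
    obtain ⟨y, hyU, hyS⟩ := mem_closure_iff.1 hl U hU hlU
    exact ⟨⟨(U, y), hU, hlU, hyU, hyS⟩, rfl⟩
  have hne : Nonempty (NhdPoint S l) := ⟨(key Set.univ isOpen_univ trivial).choose⟩
  have hdir : IsDirected (NhdPoint S l) (· ≤ ·) := by
    refine ⟨fun p q => ?_⟩
    obtain ⟨r, hr⟩ := key (p.1.1 ∩ q.1.1) (p.2.1.inter q.2.1) ⟨p.2.2.1, q.2.2.1⟩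
    exact ⟨r, hr.trans_subset Set.inter_subset_left, hr.trans_subset Set.inter_subset_right⟩
  have hconv : NetConv (fun p : NhdPoint S l => p.1.2) l := by
    intro U hU hlU
    obtain ⟨p, rfl⟩ := key U hU hlU
    exact ⟨p, fun q hq => hq q.2.2.2.1⟩
  obtain ⟨s, hs⟩ := h _ hne hdir _ l hconv _ hne hdir id monotone_id
    (fun a => ⟨a, fun _ hb => hb⟩)
  exact ⟨_, fun n => (s n).2.2.2.2, hs⟩

theorem NetConv.sTauConv {T : Type u} [TopologicalSpace T]
    (h : ∀ (S : Set T) (l : T), l ∈ closure S → ∃ s : ℕ → T, (∀ n, s n ∈ S) ∧ NetConv s l)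
    {A : Type u} [Preorder A] {x : A → T} {l : T} (hx : NetConv x l) : STauConv x l := by
  intro B _ _ _ φ _ hcof
  have hl : l ∈ closure (Set.range fun b => x (φ b)) := by
    refine mem_closure_iff.2 fun U hU hlU => ?_
    obtain ⟨a₀, ha₀⟩ := hx U hU hlU
    obtain ⟨b, hb⟩ := hcof a₀
    exact ⟨x (φ b), ha₀ _ (hb b le_rfl), b, rfl⟩
  obtain ⟨t, htS, ht⟩ := h _ l hl
  choose s hs using htS
  obtain rfl : (fun n => x (φ (s n))) = t := funext hs
  exact ⟨s, ht⟩

/-- This implication holds in every topological space. -/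
theorem STauConv.netConv {T : Type u} [TopologicalSpace T] {A : Type u} [Preorder A]
    (hne : Nonempty A) (hdir : IsDirected A (· ≤ ·)) {x : A → T} {l : T}
    (hx : STauConv x l) : NetConv x l := by
  intro U hU hlU
  by_contra! hcof
  let B : Type u := {a : A // x a ∉ U}
  have hneB : Nonempty B := by
    obtain ⟨a, -, ha⟩ := hcof hne.some
    exact ⟨⟨a, ha⟩⟩
  have hdirB : IsDirected B (· ≤ ·) := by
    refine ⟨fun a b => ?_⟩
    obtain ⟨c, hac, hbc⟩ := hdir.directed a.1 b.1
    obtain ⟨d, hcd, hd⟩ := hcof c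
    exact ⟨⟨d, hd⟩, hac.trans hcd, hbc.trans hcd⟩
  obtain ⟨s, hs⟩ := hx B hneB hdirB Subtype.val (fun _ _ hab => hab) (fun a => by
    obtain ⟨b, hab, hb⟩ := hcof a
    exact ⟨⟨b, hb⟩, fun _ hb' => le_trans hab hb'⟩)
  obtain ⟨n, hn⟩ := hs U hU hlU
  exact (s n).2 (hn n le_rfl)

/-- For a topological space `T`, every net converges iff it sτ-converges
(i.e. the topological convergence is sequential) if and only if `T` is
Fréchet–Urysohn: every point of the closure of a set is the limit of a
sequence of elements of the set. -/
theorem statement0 {T : Type u} [TopologicalSpace T] :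
    (∀ (A : Type u) [Preorder A], Nonempty A → IsDirected A (· ≤ ·) →
       ∀ (x : A → T) (l : T), NetConv x l ↔ STauConv x l) ↔
    (∀ (S : Set T) (l : T), l ∈ closure S →
       ∃ s : ℕ → T, (∀ n, s n ∈ S) ∧ NetConv s l) := by
  exact ⟨fun h => exists_seq_of_netConv_imp_sTauConv
      fun A _ hne hdir x l => (h A hne hdir x l).1,
    fun h A _ hne hdir x l => ⟨NetConv.sTauConv h, STauConv.netConv hne hdir⟩⟩
end

section
/- Let X be a Riesz space. Then X is Archimedean if and only if order convergence on X is linear, i.e., if and only if both of the following hold: (a) whenever (x_α)_{α∈A} →o x and (y_β)_{β∈B} →o y in X, the net (x_α + y_β)_{(α,β)∈A×B} →o x + y; (b) whenever (x_α)_{α∈A} →o x in X and (r_γ)_{γ∈Γ} → r is a convergent net of real numbers, the net (r_γ • x_α)_{(γ,α)∈Γ×A} →o r • x. -/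
/-!
Order convergence is tested by nets `y ↓ 0` (`DecreasesToZero`), and the sum over the product index
set of two such nets again decreases to `0` (`OrderConv.of_add`). This gives additivity in every
Riesz space, without the Archimedean property.

For scalars, `|r • x - r₀ • x₀| ≤ |r| • |x - x₀| + |r - r₀| • |x₀|`. Eventually `|r| ≤ |r₀| + 1`,
so the first term is controlled by `(|r₀| + 1) • y b`, and the second by `(1 / (n + 1)) • |x₀|`,
which decreases to `0` exactly because `X` is Archimedean
(`DecreasesToZero.one_div_smul`).

Conversely, if `0 ≤ n • x ≤ y` for all `n`, then scalar continuity applied to the sequence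
`1 / (n + 1) → 0` and the constant net `y` gives `(1 / (n + 1)) • y →o 0`, while
`x ≤ (1 / (n + 1)) • y` for all `n`; hence `x ≤ 0`.
-/

universe u v

/-- Order convergence of a net `(x a)_{a ∈ A}` to `l` in a Riesz space `X`:
there exists an antitone net `(y b)_{b ∈ B}` (over a nonempty directed preordered
index set `B`) with infimum `0` such that for every `b` there is `a₀` with
`|x a - l| ≤ y b` for all `a ≥ a₀`. -/
def OrderConv {X : Type u} [Lattice X] [AddCommGroup X] {A : Type v} [Preorder A]
    (x : A → X) (l : X) : Prop :=
  ∃ (B : Type u) (leB : B → B → Prop) (y : B → X),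
    Nonempty B ∧
    (∀ b, leB b b) ∧
    (∀ b₁ b₂ b₃, leB b₁ b₂ → leB b₂ b₃ → leB b₁ b₃) ∧
    (∀ b₁ b₂, ∃ b₃, leB b₁ b₃ ∧ leB b₂ b₃) ∧
    (∀ b₁ b₂, leB b₁ b₂ → y b₂ ≤ y b₁) ∧
    IsGLB (Set.range y) 0 ∧
    (∀ b, ∃ a₀ : A, ∀ a, a₀ ≤ a → |x a - l| ≤ y b)

/-- `y ↓ 0`: the net `y`, indexed by `B` with the nonempty directed preorder `le`, is antitone with
infimum `0`. The relation `le` is explicit, as in `OrderConv`. -/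
def DecreasesToZero {X : Type u} [Lattice X] [AddCommGroup X] {B : Type u}
    (le : B → B → Prop) (y : B → X) : Prop :=
  Nonempty B ∧
  (∀ b, le b b) ∧
  (∀ b₁ b₂ b₃, le b₁ b₂ → le b₂ b₃ → le b₁ b₃) ∧
  (∀ b₁ b₂, ∃ b₃, le b₁ b₃ ∧ le b₂ b₃) ∧
  (∀ b₁ b₂, le b₁ b₂ → y b₂ ≤ y b₁) ∧
  IsGLB (Set.range y) 0

section

variable {X : Type u} [Lattice X] [AddCommGroup X]

lemma OrderConv.exists_dominating {A : Type v} [Preorder A] {x : A → X} {l : X}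
    (h : OrderConv x l) : ∃ (B : Type u) (le : B → B → Prop) (y : B → X),
      DecreasesToZero le y ∧ ∀ b, ∃ a₀ : A, ∀ a, a₀ ≤ a → |x a - l| ≤ y b := by
  obtain ⟨B, le, y, h₁, h₂, h₃, h₄, h₅, h₆, h₇⟩ := h
  exact ⟨B, le, y, ⟨h₁, h₂, h₃, h₄, h₅, h₆⟩, h₇⟩

lemma DecreasesToZero.nonneg {B : Type u} {le : B → B → Prop} {y : B → X}
    (hy : DecreasesToZero le y) (b : B) : 0 ≤ y b :=
  hy.2.2.2.2.2.1 ⟨b, rfl⟩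

lemma DecreasesToZero.le_zero {B : Type u} {le : B → B → Prop} {y : B → X}
    (hy : DecreasesToZero le y) {d : X} (hd : ∀ b, d ≤ y b) : d ≤ 0 :=
  hy.2.2.2.2.2.2 (by rintro _ ⟨b, rfl⟩; exact hd b)

section Module

variable [Module ℝ X] [PosSMulMono ℝ X]

lemma DecreasesToZero.smul {B : Type u} {le : B → B → Prop} {y : B → X}
    (hy : DecreasesToZero le y) {M : ℝ} (hM : 0 < M) :
    DecreasesToZero le (fun b => M • y b) := by
  have hy' := hy
  obtain ⟨h₁, h₂, h₃, h₄, h₅, -⟩ := hy'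
  refine ⟨h₁, h₂, h₃, h₄, fun b c h => smul_le_smul_of_nonneg_left (h₅ _ _ h) hM.le, ?_, ?_⟩
  · rintro _ ⟨b, rfl⟩
    exact smul_nonneg hM.le (hy.nonneg b)
  · intro d hd
    have key : M⁻¹ • d ≤ 0 := hy.le_zero fun b => by
      have h := smul_le_smul_of_nonneg_left (hd ⟨b, rfl⟩) (inv_pos.2 hM).le
      rwa [inv_smul_smul₀ hM.ne'] at h
    have h := smul_le_smul_of_nonneg_left key hM.le
    rwa [smul_inv_smul₀ hM.ne', smul_zero] at h

lemma abs_real_smul_le (r : ℝ) (x : X) : |r • x| ≤ |r| • |x| := by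
  have hx : x ≤ |x| := le_abs_self x
  have hx' : -x ≤ |x| := neg_le_abs x
  rcases le_total 0 r with hr | hr
  · rw [abs_of_nonneg hr]
    refine abs_le'.2 ⟨smul_le_smul_of_nonneg_left hx hr, ?_⟩
    rw [← smul_neg]
    exact smul_le_smul_of_nonneg_left hx' hr
  · rw [abs_of_nonpos hr]
    refine abs_le'.2 ⟨?_, ?_⟩
    · rw [← neg_smul_neg]
      exact smul_le_smul_of_nonneg_left hx' (neg_nonneg.2 hr)
    · rw [← neg_smul]
      exact smul_le_smul_of_nonneg_left hx (neg_nonneg.2 hr)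

end Module

variable [IsOrderedAddMonoid X]

/-- A net is order convergent as soon as it is eventually dominated by the sums `y b + z c` of two
nets decreasing to `0`, since these sums decrease to `0` over the product index set. -/
lemma OrderConv.of_add {A : Type v} [Preorder A] {x : A → X} {l : X}
    {B : Type u} {leB : B → B → Prop} {y : B → X} (hy : DecreasesToZero leB y)
    {C : Type u} {leC : C → C → Prop} {z : C → X} (hz : DecreasesToZero leC z)
    (h : ∀ b c, ∃ a₀ : A, ∀ a, a₀ ≤ a → |x a - l| ≤ y b + z c) : OrderConv x l := by
  have hy' := hy
  have hz' := hz
  obtain ⟨⟨b₀⟩, rB, tB, dB, aB, -⟩ := hy'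
  obtain ⟨⟨c₀⟩, rC, tC, dC, aC, -⟩ := hz'
  refine ⟨B × C, fun p q => leB p.1 q.1 ∧ leC p.2 q.2, fun p => y p.1 + z p.2, ⟨(b₀, c₀)⟩,
    fun p => ⟨rB _, rC _⟩, fun p q s h₁ h₂ => ⟨tB _ _ _ h₁.1 h₂.1, tC _ _ _ h₁.2 h₂.2⟩,
    fun p q => ?_, fun p q hpq => add_le_add (aB _ _ hpq.1) (aC _ _ hpq.2), ⟨?_, ?_⟩,
    fun p => h p.1 p.2⟩
  · obtain ⟨b, hb₁, hb₂⟩ := dB p.1 q.1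
    obtain ⟨c, hc₁, hc₂⟩ := dC p.2 q.2
    exact ⟨(b, c), ⟨hb₁, hc₁⟩, hb₂, hc₂⟩
  · rintro _ ⟨p, rfl⟩
    exact add_nonneg (hy.nonneg _) (hz.nonneg _)
  · intro d hd
    refine hy.le_zero fun b => ?_
    rw [← sub_nonpos]
    refine hz.le_zero fun c => ?_
    rw [sub_le_iff_le_add']
    exact hd ⟨(b, c), rfl⟩

variable [Module ℝ X] [PosSMulMono ℝ X]

/-- In an Archimedean space `(1 / (n + 1)) • w ↓ 0` for `w ≥ 0`. The index set is lifted to the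
universe of `X`, as `OrderConv` requires. -/
lemma DecreasesToZero.one_div_smul
    (hX : ∀ x y : X, (∀ n : ℕ, 0 ≤ n • x ∧ n • x ≤ y) → x = 0) {w : X} (hw : 0 ≤ w) :
    DecreasesToZero (fun m n : ULift.{u} ℕ => m.down ≤ n.down)
      (fun n => (1 / ((n.down : ℝ) + 1)) • w) := by
  refine ⟨⟨⟨0⟩⟩, fun _ => le_rfl, fun _ _ _ => le_trans,
    fun m n => ⟨⟨max m.down n.down⟩, le_max_left _ _, le_max_right _ _⟩,
    fun m n h => smul_le_smul_of_nonneg_right (Nat.one_div_le_one_div h) hw, ?_, ?_⟩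
  · rintro _ ⟨n, rfl⟩
    exact smul_nonneg (by positivity) hw
  · intro d hd
    -- The positive part of a lower bound is still a lower bound, and it is infinitesimal.
    have h0 : d ⊔ 0 = 0 := by
      refine hX _ w fun n => ⟨nsmul_nonneg le_sup_right n, ?_⟩
      have h₁ : d ⊔ 0 ≤ (1 / ((n : ℝ) + 1)) • w :=
        sup_le (hd ⟨⟨n⟩, rfl⟩) (smul_nonneg (by positivity) hw)
      have hn : (0 : ℝ) < (n : ℝ) + 1 := by positivity
      have h₂ := smul_le_smul_of_nonneg_left h₁ hn.le
      rw [one_div, smul_inv_smul₀ hn.ne', add_smul, one_smul, Nat.cast_smul_eq_nsmul] at h₂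
      exact (le_add_of_nonneg_right le_sup_right).trans h₂
    exact sup_eq_right.1 h0

end

/-- A Riesz space `X` is Archimedean iff order convergence on `X` is linear, i.e.
iff addition is jointly order-continuous and scalar multiplication is jointly
continuous from `ℝ × X` (with the standard convergence on `ℝ`) to `X`. -/
theorem statement1 {X : Type u} [Lattice X] [AddCommGroup X]
    [CovariantClass X X (· + ·) (· ≤ ·)] [Module ℝ X] [PosSMulMono ℝ X] :
    (∀ x y : X, (∀ n : ℕ, 0 ≤ n • x ∧ n • x ≤ y) → x = 0) ↔
    ((∀ (A : Type u) [Preorder A], Nonempty A → IsDirected A (· ≤ ·) →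
        ∀ (B : Type u) [Preorder B], Nonempty B → IsDirected B (· ≤ ·) →
          ∀ (x : A → X) (y : B → X) (x₀ y₀ : X),
            OrderConv x x₀ → OrderConv y y₀ →
            OrderConv (fun p : A × B => x p.1 + y p.2) (x₀ + y₀)) ∧
     (∀ (A : Type u) [Preorder A], Nonempty A → IsDirected A (· ≤ ·) →
        ∀ (Γ : Type u) [Preorder Γ], Nonempty Γ → IsDirected Γ (· ≤ ·) →
          ∀ (x : A → X) (x₀ : X) (r : Γ → ℝ) (r₀ : ℝ),
            OrderConv x x₀ → Filter.Tendsto r Filter.atTop (nhds r₀) →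
            OrderConv (fun p : Γ × A => r p.1 • x p.2) (r₀ • x₀))) := by
  have : IsOrderedAddMonoid X :=
    { add_le_add_left := fun a b h c => by
        rw [add_comm a c, add_comm b c]
        exact CovariantClass.elim c h }
  constructor
  · intro hX
    refine ⟨?_, ?_⟩
    · intro A _ _ _ B _ _ _ x y x₀ y₀ hx hy
      obtain ⟨I, leI, u, hu, hxu⟩ := hx.exists_dominating
      obtain ⟨J, leJ, v, hv, hyv⟩ := hy.exists_dominating
      refine OrderConv.of_add hu hv fun i j => ?_
      obtain ⟨a₀, ha₀⟩ := hxu i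
      obtain ⟨b₀, hb₀⟩ := hyv j
      refine ⟨(a₀, b₀), fun p hp => ?_⟩
      have h : x p.1 + y p.2 - (x₀ + y₀) = (x p.1 - x₀) + (y p.2 - y₀) := by abel
      rw [h]
      exact (abs_add_le _ _).trans (add_le_add (ha₀ _ hp.1) (hb₀ _ hp.2))
    · intro A _ _ _ Γ _ _ _ x x₀ r r₀ hx hr
      obtain ⟨I, leI, u, hu, hxu⟩ := hx.exists_dominating
      have hM : 0 < |r₀| + 1 := by positivity
      refine OrderConv.of_add (hu.smul hM)
        (DecreasesToZero.one_div_smul hX (abs_nonneg x₀)) fun i n => ?_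
      obtain ⟨a₀, ha₀⟩ := hxu i
      have hn : (0 : ℝ) < 1 / ((n.down : ℝ) + 1) := by positivity
      have hev := Metric.tendsto_nhds.1 hr _ hn
      obtain ⟨γ₀, hγ₀⟩ := Filter.eventually_atTop.1 hev
      refine ⟨(γ₀, a₀), fun p hp => ?_⟩
      have h₁ : |r p.1 - r₀| < 1 / ((n.down : ℝ) + 1) := by
        simpa [Real.dist_eq] using hγ₀ _ hp.1
      have h₂ : |r p.1| ≤ |r₀| + 1 := by
        have h₃ : 1 / ((n.down : ℝ) + 1) ≤ 1 := by
          rw [div_le_one (by positivity)]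
          linarith [(Nat.cast_nonneg n.down : (0 : ℝ) ≤ n.down)]
        linarith [abs_sub_abs_le_abs_sub (r p.1) r₀]
      have h : r p.1 • x p.2 - r₀ • x₀ = r p.1 • (x p.2 - x₀) + (r p.1 - r₀) • x₀ := by
        rw [smul_sub, sub_smul]; abel
      rw [h]
      refine (abs_add_le _ _).trans (add_le_add ?_ ?_)
      · calc |r p.1 • (x p.2 - x₀)| ≤ |r p.1| • |x p.2 - x₀| := abs_real_smul_le _ _
          _ ≤ (|r₀| + 1) • |x p.2 - x₀| := smul_le_smul_of_nonneg_right h₂ (abs_nonneg _)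
          _ ≤ (|r₀| + 1) • u i := smul_le_smul_of_nonneg_left (ha₀ _ hp.2) hM.le
      · exact (abs_real_smul_le _ _).trans (smul_le_smul_of_nonneg_right h₁.le (abs_nonneg _))
  · rintro ⟨-, hsmul⟩ x y hxy
    have hx : 0 ≤ x := by simpa using (hxy 1).1
    refine le_antisymm ?_ hx
    have hconst : OrderConv (fun _ : PUnit.{u + 1} => y) y :=
      ⟨PUnit, fun _ _ => True, fun _ => 0, ⟨⟨⟩⟩, fun _ => trivial, fun _ _ _ _ _ => trivial,
        fun _ _ => ⟨⟨⟩, trivial, trivial⟩, fun _ _ _ => le_rfl, by simp,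
        fun _ => ⟨⟨⟩, fun _ _ => by simp⟩⟩
    have hdown : Filter.Tendsto (ULift.down : ULift.{u} ℕ → ℕ) Filter.atTop Filter.atTop :=
      Filter.tendsto_atTop.2 fun n => Filter.eventually_atTop.2 ⟨⟨n⟩, fun m hm => hm⟩
    have hr : Filter.Tendsto (fun n : ULift.{u} ℕ => 1 / ((n.down : ℝ) + 1)) Filter.atTop
        (nhds 0) := tendsto_one_div_add_atTop_nhds_zero_nat.comp hdown
    have hconv := hsmul PUnit.{u + 1} ⟨⟨⟩⟩ ⟨fun _ _ => ⟨⟨⟩, trivial, trivial⟩⟩ (ULift.{u} ℕ) ⟨⟨0⟩⟩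
      ⟨fun m n => ⟨⟨max m.down n.down⟩, le_max_left m.down n.down, le_max_right m.down n.down⟩⟩
      _ _ _ _ hconst hr
    obtain ⟨I, leI, u, hu, hyu⟩ := hconv.exists_dominating
    refine hu.le_zero fun i => ?_
    obtain ⟨p, hp⟩ := hyu i
    have h₁ := hp p le_rfl
    rw [zero_smul, sub_zero] at h₁
    refine le_trans ?_ ((le_abs_self _).trans h₁)
    have hn : (0 : ℝ) < (p.1.down : ℝ) + 1 := by positivity
    have h₂ := smul_le_smul_of_nonneg_left (hxy (p.1.down + 1)).2 (inv_pos.2 hn).le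
    rwa [← Nat.cast_smul_eq_nsmul ℝ, Nat.cast_succ, inv_smul_smul₀ hn.ne', ← one_div] at h₂
end

section
/- Let X be a Riesz space. The following are equivalent: (i) X is Archimedean; (ii) relatively uniform limits are unique, i.e., if a net (x_α)_{α∈A} satisfies x_α →r x and x_α →r y then x = y; (iii) every relatively uniformly convergent net order-converges to the same limit, i.e., x_α →r x implies x_α →o x. -/
/-!
If a net converges relatively uniformly both to `x` and to `y`, with regulators
`u` and `v`, the triangle inequality gives `n • |x - y| ≤ u + v` for all `n`, so the Archimedean
property forces `x = y`.  The Archimedean property also says that `u / (n + 1)` has infimum `0`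
(`isGLB_range_inv_smul`), and this sequence dominates any net converging with regulator `u`.

Conversely, if `0 ≤ n • x ≤ y` for all `n`, then the constant net `x` converges relatively uniformly
to `0` (`ruConv_const_zero`) as well as to `x`.  Uniqueness of limits gives `x = 0`; so does order
convergence to `0`, because then `|x|` is below a net with infimum `0`.
-/

universe u v

/-- Relatively uniform convergence of a net `(x a)_{a ∈ A}` to `l`:
there is `u ≥ 0` such that for every `n ∈ ℕ` there is `a₀` with
`n • |x a - l| ≤ u` for all `a ≥ a₀`. -/
def RUConv {X : Type u} [Lattice X] [AddCommGroup X] {A : Type v} [Preorder A]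
    (x : A → X) (l : X) : Prop :=
  ∃ u : X, 0 ≤ u ∧ ∀ n : ℕ, ∃ a₀ : A, ∀ a, a₀ ≤ a → n • |x a - l| ≤ u

section

variable {X : Type u} [Lattice X] [AddCommGroup X] [AddLeftMono X]

/-- An element witnessing failure of the Archimedean property is, as a constant net, relatively
uniformly null. -/
lemma ruConv_const_zero {x y : X} (h : ∀ n : ℕ, 0 ≤ n • x ∧ n • x ≤ y) :
    RUConv (fun _ : PUnit.{v + 1} => x) 0 := by
  have hx : 0 ≤ x := by simpa using (h 1).1
  refine ⟨y, by simpa using (h 0).2, fun n => ⟨PUnit.unit, fun _ _ => ?_⟩⟩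
  simpa [abs_of_nonneg hx] using (h n).2

lemma le_inv_smul_of_nsmul_le [Module ℝ X] [PosSMulMono ℝ X] {w u : X} {n : ℕ}
    (h : (n + 1) • w ≤ u) : w ≤ ((n : ℝ) + 1)⁻¹ • u := by
  have hn : (0 : ℝ) < (n : ℝ) + 1 := by positivity
  have h2 := smul_le_smul_of_nonneg_left h (inv_nonneg.2 hn.le)
  rwa [← Nat.cast_smul_eq_nsmul ℝ, smul_smul, Nat.cast_add_one, inv_mul_cancel₀ hn.ne',
    one_smul] at h2

lemma nsmul_le_of_le_inv_smul [Module ℝ X] [PosSMulMono ℝ X] {w u : X} {n : ℕ}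
    (h : w ≤ ((n : ℝ) + 1)⁻¹ • u) : (n + 1) • w ≤ u := by
  have hn : (0 : ℝ) < (n : ℝ) + 1 := by positivity
  have h2 := smul_le_smul_of_nonneg_left h hn.le
  rwa [smul_smul, mul_inv_cancel₀ hn.ne', one_smul, ← Nat.cast_add_one,
    Nat.cast_smul_eq_nsmul ℝ] at h2

lemma inv_smul_nonneg [Module ℝ X] [PosSMulMono ℝ X] {u : X} (hu : 0 ≤ u) (n : ℕ) :
    0 ≤ ((n : ℝ) + 1)⁻¹ • u :=
  le_inv_smul_of_nsmul_le (by simpa using hu)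

lemma isGLB_range_inv_smul [Module ℝ X] [PosSMulMono ℝ X]
    (hA : ∀ x y : X, (∀ n : ℕ, 0 ≤ n • x ∧ n • x ≤ y) → x = 0) {u : X} (hu : 0 ≤ u) :
    IsGLB (Set.range fun n : ULift.{v} ℕ => ((n.down : ℝ) + 1)⁻¹ • u) 0 := by
  refine ⟨?_, fun z hz => ?_⟩
  · rintro _ ⟨n, rfl⟩
    exact inv_smul_nonneg hu n.down
  · -- The Archimedean property only concerns positive elements, hence the passage to `z ⊔ 0`.
    have hz0 : z ⊔ 0 = 0 := by
      refine hA _ u fun n => ⟨nsmul_nonneg le_sup_right n, ?_⟩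
      have h1 : z ⊔ 0 ≤ ((n : ℝ) + 1)⁻¹ • u :=
        sup_le (hz ⟨ULift.up n, rfl⟩) (inv_smul_nonneg hu n)
      exact (nsmul_le_nsmul_left le_sup_right n.le_succ).trans (nsmul_le_of_le_inv_smul h1)
    exact sup_eq_right.1 hz0

lemma RUConv.unique (hA : ∀ x y : X, (∀ n : ℕ, 0 ≤ n • x ∧ n • x ≤ y) → x = 0)
    {A : Type v} [Preorder A] (hdir : IsDirected A (· ≤ ·)) {f : A → X} {x y : X}
    (hx : RUConv f x) (hy : RUConv f y) : x = y := by
  obtain ⟨u, -, hu⟩ := hx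
  obtain ⟨v, -, hv⟩ := hy
  have h0 : |x - y| = 0 := by
    refine hA _ (u + v) fun n => ⟨nsmul_nonneg (abs_nonneg _) n, ?_⟩
    obtain ⟨a, ha⟩ := hu n
    obtain ⟨b, hb⟩ := hv n
    obtain ⟨c, hac, hbc⟩ := hdir.directed a b
    have htri : |x - y| ≤ |f c - x| + |f c - y| := by
      have h := abs_add_le (x - f c) (f c - y)
      rwa [sub_add_sub_cancel, abs_sub_comm x (f c)] at h
    calc n • |x - y| ≤ n • (|f c - x| + |f c - y|) := nsmul_le_nsmul_right htri n
      _ = n • |f c - x| + n • |f c - y| := nsmul_add _ _ _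
      _ ≤ u + v := add_le_add (ha c hac) (hb c hbc)
  have hle : x - y ≤ 0 := h0 ▸ le_abs_self (x - y)
  have hge : -(x - y) ≤ 0 := h0 ▸ neg_le_abs (x - y)
  exact sub_eq_zero.1 (le_antisymm hle (neg_nonpos.1 hge))

lemma RUConv.orderConv [Module ℝ X] [PosSMulMono ℝ X]
    (hA : ∀ x y : X, (∀ n : ℕ, 0 ≤ n • x ∧ n • x ≤ y) → x = 0)
    {A : Type v} [Preorder A] {f : A → X} {x : X} (hx : RUConv f x) : OrderConv f x := by
  obtain ⟨u, hu, h⟩ := hx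
  refine ⟨ULift ℕ, (· ≤ ·), fun n => ((n.down : ℝ) + 1)⁻¹ • u, ⟨⟨0⟩⟩, fun _ => le_rfl,
    fun _ _ _ => le_trans, fun m n => ⟨m ⊔ n, le_sup_left, le_sup_right⟩, fun m n hmn => ?_,
    isGLB_range_inv_smul hA hu, fun n => ?_⟩
  · refine le_inv_smul_of_nsmul_le ?_
    have hmn' : m.down + 1 ≤ n.down + 1 := Nat.succ_le_succ hmn
    exact (nsmul_le_nsmul_left (inv_smul_nonneg hu n.down) hmn').trans
      (nsmul_le_of_le_inv_smul le_rfl)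
  · obtain ⟨a, ha⟩ := h (n.down + 1)
    exact ⟨a, fun b hb => le_inv_smul_of_nsmul_le (ha b hb)⟩

end

/-- For a Riesz space `X`, the following are equivalent:
(i) `X` is Archimedean;
(ii) relatively uniform limits of nets are unique;
(iii) every relatively uniformly convergent net order-converges to the same limit. -/
theorem statement2 {X : Type u} [Lattice X] [AddCommGroup X]
    [CovariantClass X X (· + ·) (· ≤ ·)] [Module ℝ X] [PosSMulMono ℝ X] :
    List.TFAE [
      (∀ x y : X, (∀ n : ℕ, 0 ≤ n • x ∧ n • x ≤ y) → x = 0),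
      (∀ (A : Type u) [Preorder A], Nonempty A → IsDirected A (· ≤ ·) →
        ∀ (f : A → X) (x y : X), RUConv f x → RUConv f y → x = y),
      (∀ (A : Type u) [Preorder A], Nonempty A → IsDirected A (· ≤ ·) →
        ∀ (f : A → X) (x : X), RUConv f x → OrderConv f x)] := by
  tfae_have 1 → 2 := fun hA _ _ _ hdir _ _ _ hx hy => hx.unique hA hdir hy
  tfae_have 1 → 3 := fun hA _ _ _ _ _ _ hx => hx.orderConv hA
  tfae_have 2 → 1 := fun h x y hxy =>
    h PUnit inferInstance inferInstance (fun _ => x) x 0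
      ⟨0, le_rfl, fun n => ⟨PUnit.unit, fun _ _ => by simp⟩⟩ (ruConv_const_zero hxy)
  tfae_have 3 → 1 := by
    intro h x y hxy
    obtain ⟨B, leB, z, -, -, -, -, -, hz, hle⟩ :=
      h PUnit inferInstance inferInstance (fun _ => x) 0 (ruConv_const_zero hxy)
    have hx : 0 ≤ x := by simpa using (hxy 1).1
    refine le_antisymm (hz.2 ?_) hx
    rintro _ ⟨b, rfl⟩
    obtain ⟨a, ha⟩ := hle b
    simpa [abs_of_nonneg hx] using ha a le_rfl
  tfae_finish
end

section
/- Let X be a Riesz space. Then X is r-complete (every r-Cauchy net relatively uniformly converges to some element of X) if and only if every r-Cauchy sequence in X relatively uniformly converges to some element of X. -/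
/-!
The implication from nets to sequences only has to move `ℕ` into the universe of `X` (through
`ULift ℕ`). For the converse, an r-Cauchy net `a` with regulator `u` has an increasing sequence of
indices `s n` past which any two values satisfy `n • |a γ₁ - a γ₂| ≤ u`. Then `a ∘ s` is an r-Cauchy
sequence; if it converges to `x` with regulator `v`, the triangle inequality shows that `a`
converges to `x` with regulator `u + v`.
-/

universe u v

/-- A net `(a γ)_{γ ∈ Γ}` is r-Cauchy if the net `(a γ₁ - a γ₂)` over `Γ × Γ`
(with the componentwise preorder) relatively uniformly converges to `0`. -/
def RCauchy {X : Type u} [Lattice X] [AddCommGroup X] {Γ : Type v} [Preorder Γ]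
    (a : Γ → X) : Prop :=
  RUConv (fun p : Γ × Γ => a p.1 - a p.2) 0

/-- A single increasing sequence of indices witnesses the r-Cauchy property of a net. -/
lemma RCauchy.exists_monotone {X : Type u} [Lattice X] [AddCommGroup X]
    {Γ : Type v} [Preorder Γ] (hd : IsDirected Γ (· ≤ ·)) {a : Γ → X} (ha : RCauchy a) :
    ∃ u : X, 0 ≤ u ∧ ∃ s : ℕ → Γ, Monotone s ∧
      ∀ n γ₁ γ₂, s n ≤ γ₁ → s n ≤ γ₂ → n • |a γ₁ - a γ₂| ≤ u := by
  obtain ⟨u, hu, h⟩ := ha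
  choose p hp using h
  choose f hf₁ hf₂ using fun b c : Γ => hd.directed b c
  let t : ℕ → Γ := fun n => f (p n).1 (p n).2
  let s : ℕ → Γ := fun n => Nat.rec (t 0) (fun k b => f b (t (k + 1))) n
  have hts : ∀ n, t n ≤ s n := by
    intro n
    cases n with
    | zero => exact le_refl _
    | succ k => exact hf₂ _ _
  refine ⟨u, hu, s, monotone_nat_of_le_succ fun n => hf₁ _ _, fun n γ₁ γ₂ h₁ h₂ => ?_⟩
  have h := hp n (γ₁, γ₂) ⟨((hf₁ _ _).trans (hts n)).trans h₁, ((hf₂ _ _).trans (hts n)).trans h₂⟩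
  simpa only [sub_zero] using h

/-- A Riesz space `X` is r-complete (every r-Cauchy net relatively uniformly
converges) iff every r-Cauchy sequence relatively uniformly converges. -/
theorem statement4 {X : Type u} [Lattice X] [AddCommGroup X]
    [CovariantClass X X (· + ·) (· ≤ ·)] [Module ℝ X] [PosSMulMono ℝ X] :
    (∀ (Γ : Type u) [Preorder Γ], Nonempty Γ → IsDirected Γ (· ≤ ·) →
       ∀ a : Γ → X, RCauchy a → ∃ x : X, RUConv a x) ↔
    (∀ a : ℕ → X, RCauchy a → ∃ x : X, RUConv a x) := by
  have : AddLeftMono X := ‹CovariantClass X X (· + ·) (· ≤ ·)›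
  have : IsOrderedAddMonoid X := { add_le_add_left := fun a b h c => by gcongr }
  constructor
  · intro H a ha
    have hdir : IsDirected (ULift.{u} ℕ) (· ≤ ·) :=
      ⟨fun b c => ⟨⟨max b.down c.down⟩, le_max_left b.down c.down, le_max_right b.down c.down⟩⟩
    obtain ⟨u, hu, h⟩ := ha
    obtain ⟨x, v, hv, hx⟩ := H (ULift.{u} ℕ) ⟨⟨0⟩⟩ hdir (fun n => a n.down)
      ⟨u, hu, fun n => by
        obtain ⟨p, hp⟩ := h n
        exact ⟨(⟨p.1⟩, ⟨p.2⟩), fun q hq => hp (q.1.down, q.2.down) ⟨hq.1, hq.2⟩⟩⟩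
    refine ⟨x, v, hv, fun n => ?_⟩
    obtain ⟨m, hm⟩ := hx n
    exact ⟨m.down, fun k hk => hm ⟨k⟩ hk⟩
  · intro H Γ _ _ hd a ha
    obtain ⟨u, hu, s, hs, hc⟩ := ha.exists_monotone hd
    obtain ⟨x, v, hv, hx⟩ := H (a ∘ s) ⟨u, hu, fun n => ⟨(n, n), fun q hq => by
      simpa only [sub_zero, Function.comp] using hc n _ _ (hs hq.1) (hs hq.2)⟩⟩
    refine ⟨x, u + v, add_nonneg hu hv, fun n => ?_⟩
    obtain ⟨m₀, hm₀⟩ := hx n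
    -- `s (max m₀ n)` is late enough for both estimates.
    refine ⟨s (max m₀ n), fun γ hγ => ?_⟩
    have h₁ := hc n γ (s (max m₀ n)) ((hs (le_max_right _ _)).trans hγ) (hs (le_max_right _ _))
    have h₂ := hm₀ (max m₀ n) (le_max_left _ _)
    calc n • |a γ - x|
        = n • |(a γ - a (s (max m₀ n))) + (a (s (max m₀ n)) - x)| := by rw [sub_add_sub_cancel]
      _ ≤ n • (|a γ - a (s (max m₀ n))| + |a (s (max m₀ n)) - x|) :=
          nsmul_le_nsmul_right (abs_add_le _ _) n
      _ = n • |a γ - a (s (max m₀ n))| + n • |a (s (max m₀ n)) - x| := nsmul_add _ _ _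
      _ ≤ u + v := add_le_add h₁ h₂
end

section
/- Let D be a nonempty set and consider ℝ^D (all real-valued functions on D) with the pointwise order. Let * : ℝ^D × ℝ^D → ℝ^D be an ℝ-bilinear associative multiplication such that a ≥ 0 and b ≥ 0 imply a*b ≥ 0, and such that a ⊓ b = 0 implies (u*a) ⊓ b = 0 and (a*u) ⊓ b = 0 for all u ≥ 0 (i.e., * makes ℝ^D an f-algebra). Define ζ ∈ ℝ^D by ζ(d) := (e_d * e_d)(d), where e_d ∈ ℝ^D equals 1 at d and 0 elsewhere. Then (a * b)(d) = ζ(d)·a(d)·b(d) for all a, b ∈ ℝ^D and all d ∈ D; that is, a * b = ζ·a·b, the pointwise product of ζ, a and b. -/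
/-!
Disjointness of a nonnegative `a` from `e_d` says exactly that `a d = 0`, so the f-algebra axiom
gives `(u * a) d = 0 = (a * u) d` for `u ≥ 0` as soon as `a d = 0`. Splitting into positive and
negative parts removes both sign restrictions, so `(a * b) d` depends only on `a d` and `b d`.
Replacing `a` by `a d • e_d` and `b` by `b d • e_d` and using bilinearity gives the formula.
-/

universe u

/-- An additive functional vanishes at `a` once it vanishes at the positive and negative parts. -/
lemma additive_eq_zero_of_parts {D : Type u} (F : (D → ℝ) → ℝ)
    (hF : ∀ a b, F (a + b) = F a + F b) (a : D → ℝ)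
    (h₁ : F (a ⊔ 0) = 0) (h₂ : F (-a ⊔ 0) = 0) : F a = 0 := by
  have key : a + (-a ⊔ 0) = a ⊔ 0 := by
    rw [add_sup, add_neg_cancel, add_zero, sup_comm]
  have h := hF a (-a ⊔ 0)
  rw [key, h₁, h₂] at h
  linarith

/-- A functional which is additive and vanishes on functions vanishing at `d` only depends on the
value at `d`. -/
lemma additive_eq_single {D : Type u} [DecidableEq D] (F : (D → ℝ) → ℝ)
    (hF : ∀ a b, F (a + b) = F a + F b) (d : D) (h₀ : ∀ a, a d = 0 → F a = 0)
    (a : D → ℝ) : F a = F (a d • Pi.single d (1 : ℝ)) := by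
  have h := hF (a - a d • Pi.single d (1 : ℝ)) (a d • Pi.single d (1 : ℝ))
  have hz : F (a - a d • Pi.single d (1 : ℝ)) = 0 := h₀ _ (by simp)
  rw [sub_add_cancel, hz, zero_add] at h
  exact h

/-- Any f-algebra multiplication `*` on `ℝ^D` (with the pointwise order) is of the
form `a * b = ζ·a·b` where `ζ(d) = (e_d * e_d)(d)` and `e_d` is the indicator of `d`. -/
theorem statement11 {D : Type u} [Nonempty D] [DecidableEq D]
    (mul : (D → ℝ) → (D → ℝ) → (D → ℝ))
    (hadd_left : ∀ a b c : D → ℝ, mul (a + b) c = mul a c + mul b c)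
    (hadd_right : ∀ a b c : D → ℝ, mul a (b + c) = mul a b + mul a c)
    (hsmul_left : ∀ (t : ℝ) (a b : D → ℝ), mul (t • a) b = t • mul a b)
    (hsmul_right : ∀ (t : ℝ) (a b : D → ℝ), mul a (t • b) = t • mul a b)
    (hassoc : ∀ a b c : D → ℝ, mul (mul a b) c = mul a (mul b c))
    (hpos : ∀ a b : D → ℝ, 0 ≤ a → 0 ≤ b → 0 ≤ mul a b)
    (hf : ∀ a b u : D → ℝ, a ⊓ b = 0 → 0 ≤ u →
      mul u a ⊓ b = 0 ∧ mul a u ⊓ b = 0) :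
    ∀ (a b : D → ℝ) (d : D),
      mul a b d = (mul (Pi.single d (1 : ℝ)) (Pi.single d (1 : ℝ)) d) * a d * b d := by
  intro a b d
  have hdisj : ∀ a : D → ℝ, 0 ≤ a → a d = 0 → a ⊓ Pi.single d (1 : ℝ) = 0 := by
    intro a ha had
    ext x
    by_cases hx : x = d
    · subst hx; simp [had]
    · simpa [hx] using ha x
  have heval : ∀ c : D → ℝ, c ⊓ Pi.single d (1 : ℝ) = 0 → c d = 0 := by
    intro c hc
    have h := congrFun hc d
    simp only [Pi.inf_apply, Pi.single_eq_same, Pi.zero_apply] at h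
    rcases min_choice (c d) 1 with h' | h' <;> linarith
  have hadd_left' : ∀ c a b : D → ℝ, mul (a + b) c d = mul a c d + mul b c d :=
    fun c a b => congrFun (hadd_left a b c) d
  have hadd_right' : ∀ c a b : D → ℝ, mul c (a + b) d = mul c a d + mul c b d :=
    fun c a b => congrFun (hadd_right c a b) d
  have hR : ∀ u a : D → ℝ, a d = 0 → mul u a d = 0 := by
    have h₁ : ∀ u a : D → ℝ, 0 ≤ a → a d = 0 → mul u a d = 0 := fun u a ha had =>
      additive_eq_zero_of_parts (fun u => mul u a d) (hadd_left' a) u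
        (heval _ (hf _ _ _ (hdisj a ha had) le_sup_right).1)
        (heval _ (hf _ _ _ (hdisj a ha had) le_sup_right).1)
    exact fun u a had => additive_eq_zero_of_parts (fun a => mul u a d) (hadd_right' u) a
      (h₁ _ _ le_sup_right (by simp [had])) (h₁ _ _ le_sup_right (by simp [had]))
  have hL : ∀ u a : D → ℝ, a d = 0 → mul a u d = 0 := by
    have h₁ : ∀ u a : D → ℝ, 0 ≤ a → a d = 0 → mul a u d = 0 := fun u a ha had =>
      additive_eq_zero_of_parts (fun u => mul a u d) (hadd_right' a) u
        (heval _ (hf _ _ _ (hdisj a ha had) le_sup_right).2)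
        (heval _ (hf _ _ _ (hdisj a ha had) le_sup_right).2)
    exact fun u a had => additive_eq_zero_of_parts (fun a => mul a u d) (hadd_left' u) a
      (h₁ _ _ le_sup_right (by simp [had])) (h₁ _ _ le_sup_right (by simp [had]))
  have e₁ := additive_eq_single (fun a => mul a b d) (hadd_left' b) d (hL b) a
  have e₂ := additive_eq_single (fun b => mul (a d • Pi.single d (1 : ℝ)) b d)
    (hadd_right' _) d (hR _) b
  beta_reduce at e₁ e₂
  rw [e₁, e₂, hsmul_left, hsmul_right]
  simp only [Pi.smul_apply, smul_eq_mul]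
  ring
end

section
/- Let X be an Archimedean f-algebra, let (x_α)_{α∈A} be a net in X such that every x_α is nilpotent (for each α there exists n ≥ 1 with x_α^n = 0), and let x ∈ X be such that u·|x_α − x| →o 0 for every u ∈ X₊ (i.e., x_α mo-converges to x). Then x is nilpotent. -/
/-!
The proof shows that a nilpotent element `a` of an Archimedean f-algebra annihilates the whole
algebra, and that this passes to the limit.

* Squares are nonnegative and `|a| * |a| = a * a`, because `a⁺ * a⁻ = a⁻ * a⁺ = 0`. Hence `|a|` is
  nilpotent when `a` is.
* If `a ≥ 0` and `a ^ (k + 1) = 0` with `k ≥ 2`, then `n • a ^ k ≤ a` for all `n`, so `a ^ k = 0` by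
  the Archimedean property; descending, `a * a = 0` (`mul_self_eq_zero_of_iterMul`).
* If `a, y ≥ 0` and `a * a = 0`, expanding `0 ≤ (n • a - y)²` gives `n • (a * y + y * a) ≤ y * y` for
  all `n`, so `y * a = 0` (`mul_eq_zero_of_sq`).

Consequently `l * x a = 0` for every index `a`, so `|l * l| = |l * (l - x a)| ≤ |l| * |x a - l|`. The right
side order-converges to `0`, hence `l * l = 0`.
-/

universe u v

/-- `iterMul x n = x^(n+1)`: iterated product in a (possibly non-unital) ring. -/
def iterMul {X : Type u} [Mul X] (x : X) : ℕ → X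
  | 0 => x
  | n + 1 => iterMul x n * x

section FAlgebra

variable {X : Type u} [Lattice X] [NonUnitalRing X] [IsOrderedAddMonoid X]

lemma mul_le_mul_left_of_pos (hpos : ∀ x y : X, 0 ≤ x → 0 ≤ y → 0 ≤ x * y)
    {a b c : X} (hc : 0 ≤ c) (h : a ≤ b) : c * a ≤ c * b := by
  have := hpos c (b - a) hc (sub_nonneg.2 h)
  rwa [mul_sub, sub_nonneg] at this

lemma mul_eq_zero_of_disjoint
    (hf : ∀ x y u : X, x ⊓ y = 0 → 0 ≤ u → (u * x) ⊓ y = 0 ∧ (x * u) ⊓ y = 0)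
    {p q : X} (hp : 0 ≤ p) (hq : 0 ≤ q) (h : p ⊓ q = 0) : p * q = 0 := by
  have h1 : (p * q) ⊓ p = 0 := (hf q p p (by rwa [inf_comm]) hp).1
  have h2 := (hf p (p * q) q (by rwa [inf_comm]) hq).2
  rwa [inf_idem] at h2

lemma posPart_mul_negPart
    (hf : ∀ x y u : X, x ⊓ y = 0 → 0 ≤ u → (u * x) ⊓ y = 0 ∧ (x * u) ⊓ y = 0)
    (a : X) : a⁺ * a⁻ = 0 ∧ a⁻ * a⁺ = 0 := by
  have h : a⁺ ⊓ a⁻ = 0 := posPart_inf_negPart_eq_zero a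
  exact ⟨mul_eq_zero_of_disjoint hf (posPart_nonneg a) (negPart_nonneg a) h,
    mul_eq_zero_of_disjoint hf (negPart_nonneg a) (posPart_nonneg a) (by rwa [inf_comm])⟩

lemma abs_mul_abs_eq
    (hf : ∀ x y u : X, x ⊓ y = 0 → 0 ≤ u → (u * x) ⊓ y = 0 ∧ (x * u) ⊓ y = 0)
    (a : X) : |a| * |a| = a * a := by
  obtain ⟨h1, h2⟩ := posPart_mul_negPart hf a
  have e1 : |a| = a⁺ + a⁻ := (posPart_add_negPart a).symm
  have e2 : a * a = (a⁺ - a⁻) * (a⁺ - a⁻) := by rw [posPart_sub_negPart]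
  rw [e1, e2]
  simp only [add_mul, mul_add, sub_mul, mul_sub, h1, h2]
  abel

lemma sq_nonneg_of_fAlgebra (hpos : ∀ x y : X, 0 ≤ x → 0 ≤ y → 0 ≤ x * y)
    (hf : ∀ x y u : X, x ⊓ y = 0 → 0 ≤ u → (u * x) ⊓ y = 0 ∧ (x * u) ⊓ y = 0)
    (a : X) : 0 ≤ a * a := by
  rw [← abs_mul_abs_eq hf]
  exact hpos _ _ (abs_nonneg a) (abs_nonneg a)

lemma abs_mul_le_of_pos (hpos : ∀ x y : X, 0 ≤ x → 0 ≤ y → 0 ≤ x * y)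
    (a b : X) : |a * b| ≤ |a| * |b| := by
  have ea : |a| = a⁺ + a⁻ := (posPart_add_negPart a).symm
  have eb : |b| = b⁺ + b⁻ := (posPart_add_negPart b).symm
  have e : a * b = (a⁺ - a⁻) * (b⁺ - b⁻) := by rw [posPart_sub_negPart, posPart_sub_negPart]
  have hpp := hpos _ _ (posPart_nonneg a) (posPart_nonneg b)
  have hpn := hpos _ _ (posPart_nonneg a) (negPart_nonneg b)
  have hnp := hpos _ _ (negPart_nonneg a) (posPart_nonneg b)
  have hnn := hpos _ _ (negPart_nonneg a) (negPart_nonneg b)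
  rw [ea, eb, e]
  refine abs_le'.2 ⟨?_, ?_⟩
  · rw [← sub_nonneg]
    have : (a⁺ + a⁻) * (b⁺ + b⁻) - (a⁺ - a⁻) * (b⁺ - b⁻)
        = (a⁺ * b⁻ + a⁻ * b⁺) + (a⁺ * b⁻ + a⁻ * b⁺) := by
      simp only [add_mul, mul_add, sub_mul, mul_sub]
      abel
    rw [this]
    exact add_nonneg (add_nonneg hpn hnp) (add_nonneg hpn hnp)
  · rw [← sub_nonneg]
    have : (a⁺ + a⁻) * (b⁺ + b⁻) - -((a⁺ - a⁻) * (b⁺ - b⁻))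
        = (a⁺ * b⁺ + a⁻ * b⁻) + (a⁺ * b⁺ + a⁻ * b⁻) := by
      simp only [add_mul, mul_add, sub_mul, mul_sub]
      abel
    rw [this]
    exact add_nonneg (add_nonneg hpp hnn) (add_nonneg hpp hnn)

lemma mul_eq_zero_of_sq (hpos : ∀ x y : X, 0 ≤ x → 0 ≤ y → 0 ≤ x * y)
    (hf : ∀ x y u : X, x ⊓ y = 0 → 0 ≤ u → (u * x) ⊓ y = 0 ∧ (x * u) ⊓ y = 0)
    (harch : ∀ x y : X, (∀ n : ℕ, 0 ≤ n • x ∧ n • x ≤ y) → x = 0)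
    {a y : X} (ha : 0 ≤ a) (hy : 0 ≤ y) (h : a * a = 0) : y * a = 0 := by
  have h1 := hpos a y ha hy
  have h2 := hpos y a hy ha
  have h3 : a * y + y * a = 0 := by
    refine harch _ (y * y) fun n => ⟨nsmul_nonneg (add_nonneg h1 h2) n, ?_⟩
    have := sq_nonneg_of_fAlgebra hpos hf (n • a - y)
    rw [sub_mul, mul_sub, mul_sub, smul_mul_assoc, mul_smul_comm, h, smul_mul_assoc,
      mul_smul_comm] at this
    rw [← sub_nonneg]
    convert this using 1
    rw [smul_add, smul_zero, smul_zero]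
    abel
  exact le_antisymm (h3 ▸ le_add_of_nonneg_left h1) h2

lemma nsmul_inf_eq_zero {a z : X} (ha : 0 ≤ a) (hz : 0 ≤ z) (h : a ⊓ z = 0) (n : ℕ) :
    (n • a) ⊓ z = 0 := by
  induction n with
  | zero => simpa using hz
  | succ n ih =>
    rw [succ_nsmul]
    refine le_antisymm ?_ (le_inf (add_nonneg (nsmul_nonneg ha n) ha) hz)
    -- A lower bound `w` of `n • a + a` and `z` satisfies `w - a ≤ (n • a) ⊓ z = 0`, so `w ≤ a ⊓ z`.
    set w := (n • a + a) ⊓ z with hw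
    have h1 : w - a ≤ (n • a) ⊓ z :=
      le_inf (sub_le_iff_le_add.2 inf_le_left) ((sub_le_self _ ha).trans inf_le_right)
    rw [ih, sub_nonpos] at h1
    exact h ▸ le_inf h1 inf_le_right

lemma iterMul_mul_iterMul (a : X) (m n : ℕ) :
    iterMul a m * iterMul a n = iterMul a (m + n + 1) := by
  induction n with
  | zero => rfl
  | succ n ih =>
    change iterMul a m * (iterMul a n * a) = iterMul a (m + n + 1) * a
    rw [← mul_assoc, ih]

lemma iterMul_sq (a : X) (n : ℕ) : iterMul (a * a) n = iterMul a (2 * n + 1) := by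
  induction n with
  | zero => rfl
  | succ n ih =>
    change iterMul (a * a) n * (a * a) = iterMul a (2 * n + 1) * a * a
    rw [ih, mul_assoc]

lemma iterMul_nonneg (hpos : ∀ x y : X, 0 ≤ x → 0 ≤ y → 0 ≤ x * y)
    {a : X} (ha : 0 ≤ a) (n : ℕ) : 0 ≤ iterMul a n := by
  induction n with
  | zero => exact ha
  | succ n ih => exact hpos _ _ ih ha

/-- One step of the descent: `a ^ (k + 3) = 0` implies `a ^ (k + 2) = 0`. With `z = n • a ^ (k + 2) - a`,
the relation `a * z⁻ ≥ a * a` makes `a * a`, hence also `n • a ^ (k + 2) ≥ z⁺`, disjoint from `z⁺`;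
so `z⁺ = 0`. -/
lemma iterMul_descent (hpos : ∀ x y : X, 0 ≤ x → 0 ≤ y → 0 ≤ x * y)
    (hf : ∀ x y u : X, x ⊓ y = 0 → 0 ≤ u → (u * x) ⊓ y = 0 ∧ (x * u) ⊓ y = 0)
    (harch : ∀ x y : X, (∀ n : ℕ, 0 ≤ n • x ∧ n • x ≤ y) → x = 0)
    {a : X} (ha : 0 ≤ a) (k : ℕ) (h : iterMul a (k + 2) = 0) : iterMul a (k + 1) = 0 := by
  have hk := iterMul_nonneg hpos ha (k + 1)
  refine harch _ a fun n => ⟨nsmul_nonneg hk n, ?_⟩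
  set z := n • iterMul a (k + 1) - a with hz
  have hd : (a * z⁻) ⊓ z⁺ = 0 :=
    (hf z⁻ z⁺ a (by rw [inf_comm]; exact posPart_inf_negPart_eq_zero z) ha).1
  have h0 : a * iterMul a (k + 1) = 0 := by
    have := iterMul_mul_iterMul a 0 (k + 1)
    rw [show 0 + (k + 1) + 1 = k + 2 by omega, h] at this
    exact this
  have hle : a * a ≤ a * z⁻ := by
    have := mul_le_mul_left_of_pos hpos ha (neg_le_negPart z)
    rwa [hz, neg_sub, mul_sub, mul_smul_comm, h0, smul_zero, sub_zero] at this
  have hsq : (a * a) ⊓ z⁺ = 0 :=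
    le_antisymm (hd ▸ inf_le_inf_right _ hle) (le_inf (hpos _ _ ha ha) (posPart_nonneg z))
  have hkz : iterMul a (k + 1) ⊓ z⁺ = 0 := by
    cases k with
    | zero => exact hsq
    | succ j =>
      change (iterMul a j * a * a) ⊓ z⁺ = 0
      rw [mul_assoc]
      exact (hf _ _ _ hsq (iterMul_nonneg hpos ha j)).1
  have hzle : z⁺ ≤ n • iterMul a (k + 1) :=
    sup_le (sub_le_self _ ha) (nsmul_nonneg hk n)
  have hz0 : z⁺ = 0 := by
    rw [← nsmul_inf_eq_zero hk (posPart_nonneg z) hkz n, inf_eq_right.2 hzle]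
  exact sub_nonpos.1 (posPart_eq_zero.1 hz0)

lemma mul_self_eq_zero_of_iterMul (hpos : ∀ x y : X, 0 ≤ x → 0 ≤ y → 0 ≤ x * y)
    (hf : ∀ x y u : X, x ⊓ y = 0 → 0 ≤ u → (u * x) ⊓ y = 0 ∧ (x * u) ⊓ y = 0)
    (harch : ∀ x y : X, (∀ n : ℕ, 0 ≤ n • x ∧ n • x ≤ y) → x = 0)
    {a : X} (ha : 0 ≤ a) (n : ℕ) (h : iterMul a n = 0) : a * a = 0 := by
  have key : ∀ k, iterMul a (k + 1) = 0 → a * a = 0 := by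
    intro k
    induction k with
    | zero => exact id
    | succ k ih => exact fun hk => ih (iterMul_descent hpos hf harch ha k hk)
  refine key n ?_
  change iterMul a n * a = 0
  rw [h, zero_mul]

lemma mul_eq_zero_of_nilpotent (hpos : ∀ x y : X, 0 ≤ x → 0 ≤ y → 0 ≤ x * y)
    (hf : ∀ x y u : X, x ⊓ y = 0 → 0 ≤ u → (u * x) ⊓ y = 0 ∧ (x * u) ⊓ y = 0)
    (harch : ∀ x y : X, (∀ n : ℕ, 0 ≤ n • x ∧ n • x ≤ y) → x = 0)
    {a : X} (n : ℕ) (h : iterMul a n = 0) (y : X) : y * a = 0 := by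
  have h1 : iterMul |a| (2 * n + 1) = 0 := by
    rw [← iterMul_sq, abs_mul_abs_eq hf, iterMul_sq, two_mul, ← iterMul_mul_iterMul, h, zero_mul]
  have h2 := mul_self_eq_zero_of_iterMul hpos hf harch (abs_nonneg a) _ h1
  have h3 := abs_mul_le_of_pos hpos y a
  rw [mul_eq_zero_of_sq hpos hf harch (abs_nonneg a) (abs_nonneg y) h2] at h3
  exact le_antisymm ((le_abs_self _).trans h3) (neg_nonpos.1 ((neg_le_abs _).trans h3))

end FAlgebra

/-- In an Archimedean f-algebra, if each member of a net is nilpotent and the net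
mo-converges to `x` (i.e. `u·|x_α − x| →o 0` for every `u ∈ X₊`), then `x` is
nilpotent. -/
theorem statement12 {X : Type u} [Lattice X] [NonUnitalRing X]
    [CovariantClass X X (· + ·) (· ≤ ·)] [Module ℝ X] [PosSMulMono ℝ X]
    [IsScalarTower ℝ X X] [SMulCommClass ℝ X X]
    (hpos : ∀ x y : X, 0 ≤ x → 0 ≤ y → 0 ≤ x * y)
    (hf : ∀ x y u : X, x ⊓ y = 0 → 0 ≤ u → (u * x) ⊓ y = 0 ∧ (x * u) ⊓ y = 0)
    (harch : ∀ x y : X, (∀ n : ℕ, 0 ≤ n • x ∧ n • x ≤ y) → x = 0)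
    {A : Type v} [Preorder A] [Nonempty A] (hA : IsDirected A (· ≤ ·))
    (x : A → X) (hnil : ∀ a : A, ∃ n : ℕ, iterMul (x a) n = 0)
    (l : X) (hmo : ∀ u : X, 0 ≤ u → OrderConv (fun a => u * |x a - l|) 0) :
    ∃ n : ℕ, iterMul l n = 0 := by
  have : IsOrderedAddMonoid X :=
    { add_le_add_left := fun a b h c => by
        simpa only [add_comm] using CovariantClass.elim (μ := (· + ·)) (r := (· ≤ ·)) c h }
  refine ⟨1, ?_⟩
  change l * l = 0
  obtain ⟨B, leB, y, -, -, -, -, -, hglb, hconv⟩ := hmo |l| (abs_nonneg l)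
  have hle : |l * l| ≤ 0 := by
    refine hglb.2 ?_
    rintro _ ⟨b, rfl⟩
    obtain ⟨a, ha⟩ := hconv b
    obtain ⟨n, hn⟩ := hnil a
    have h1 : l * l = l * (l - x a) := by
      rw [mul_sub, mul_eq_zero_of_nilpotent hpos hf harch n hn, sub_zero]
    have h2 := ha a le_rfl
    rw [sub_zero] at h2
    calc |l * l| = |l * (l - x a)| := by rw [← h1]
      _ ≤ |l| * |l - x a| := abs_mul_le_of_pos hpos _ _
      _ = |l| * |x a - l| := by rw [abs_sub_comm]
      _ ≤ y b := (le_abs_self _).trans h2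
  exact le_antisymm ((le_abs_self _).trans hle) (neg_nonpos.1 ((neg_le_abs _).trans hle))
end

section
/- Let X be an Archimedean f-algebra. Then mo-limits in X are unique — i.e., whenever a net (x_α)_{α∈A} satisfies u·|x_α − x| →o 0 and u·|x_α − y| →o 0 for every u ∈ X₊, it follows that x = y — if and only if X is semiprime (x·x = 0 implies x = 0). -/
/-!
If `X` is semiprime and `f` mo-converges to `x` and to `y`, then the product `u * |x - y|` is at most
`u * |f a - x| + u * |f a - y|`, which is dominated by sums of two nets decreasing to `0`. Hence it
vanishes for all `u ≥ 0` (`le_zero_of_orderConv`), and `u = |x - y|` makes the square of `|x - y|`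
zero.

Conversely, in an Archimedean f-algebra `x * x = 0` gives `|x| * |x| = 0` and then `u * |x| = 0`
for all `u ≥ 0` (`abs_mul_abs_eq_mul_self`, `mul_eq_zero_of_mul_self_eq_zero`), so such an `x` is a
second mo-limit of the constant net `0`. For `a, u ≥ 0` with `a * a = 0`, the annihilation follows
from `n • (u * a) ≤ u * u` for all `n`, which is obtained by splitting `n • a - u` into its disjoint
positive and negative parts.
-/

universe u v

/-- Disjoint positive elements of an f-algebra have product zero. -/
theorem mul_eq_zero_of_inf_eq_zero {X : Type u} [Lattice X] [NonUnitalRing X]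
    (hf : ∀ x y u : X, x ⊓ y = 0 → 0 ≤ u → (u * x) ⊓ y = 0 ∧ (x * u) ⊓ y = 0)
    {p q : X} (h : p ⊓ q = 0) : p * q = 0 := by
  have hp : 0 ≤ p := h ▸ inf_le_left
  have hq : 0 ≤ q := h ▸ inf_le_right
  have h1 : (p * q) ⊓ p = 0 := (hf q p p (by rwa [inf_comm]) hp).1
  have h2 := (hf p (p * q) q (by rwa [inf_comm]) hq).2
  rwa [inf_idem] at h2

section FAlgebra

variable {X : Type u} [Lattice X] [NonUnitalRing X] [CovariantClass X X (· + ·) (· ≤ ·)]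

theorem mul_le_mul_left_of_hpos (hpos : ∀ x y : X, 0 ≤ x → 0 ≤ y → 0 ≤ x * y)
    {u x y : X} (hu : 0 ≤ u) (h : x ≤ y) : u * x ≤ u * y := by
  have := hpos u (y - x) hu (sub_nonneg.2 h)
  rwa [mul_sub, sub_nonneg] at this

theorem mul_le_mul_right_of_hpos (hpos : ∀ x y : X, 0 ≤ x → 0 ≤ y → 0 ≤ x * y)
    {u x y : X} (hu : 0 ≤ u) (h : x ≤ y) : x * u ≤ y * u := by
  have := hpos (y - x) u (sub_nonneg.2 h) hu
  rwa [sub_mul, sub_nonneg] at this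

theorem abs_mul_abs_eq_mul_self
    (hf : ∀ x y u : X, x ⊓ y = 0 → 0 ≤ u → (u * x) ⊓ y = 0 ∧ (x * u) ⊓ y = 0)
    (x : X) : |x| * |x| = x * x := by
  have h := posPart_inf_negPart_eq_zero x
  have h1 := mul_eq_zero_of_inf_eq_zero hf h
  have h2 := mul_eq_zero_of_inf_eq_zero hf (by rwa [inf_comm] at h)
  have hx : x * x = (x⁺ - x⁻) * (x⁺ - x⁻) := by rw [posPart_sub_negPart]
  rw [hx, ← posPart_add_negPart x]
  simp only [mul_add, add_mul, mul_sub, sub_mul, h1, h2]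
  abel

/-- In an Archimedean f-algebra, a positive element of square zero is annihilated by
multiplication on the left by any positive element. -/
theorem mul_eq_zero_of_mul_self_eq_zero
    (hpos : ∀ x y : X, 0 ≤ x → 0 ≤ y → 0 ≤ x * y)
    (hf : ∀ x y u : X, x ⊓ y = 0 → 0 ≤ u → (u * x) ⊓ y = 0 ∧ (x * u) ⊓ y = 0)
    (harch : ∀ x y : X, (∀ n : ℕ, 0 ≤ n • x ∧ n • x ≤ y) → x = 0)
    {a u : X} (ha : 0 ≤ a) (hu : 0 ≤ u) (h : a * a = 0) : u * a = 0 := by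
  refine harch _ (u * u) fun n => ⟨nsmul_nonneg (hpos _ _ hu ha) n, ?_⟩
  have hd := posPart_sub_negPart (n • a - u)
  have hdisj := posPart_inf_negPart_eq_zero (n • a - u)
  have hp0 := posPart_nonneg (n • a - u)
  have hq0 := negPart_nonneg (n • a - u)
  have hpn : (n • a - u)⁺ ≤ n • a := sup_le (sub_le_self _ hu) (nsmul_nonneg ha n)
  have hqu : (n • a - u)⁻ ≤ u := by
    refine sup_le ?_ hu
    rw [neg_sub]
    exact sub_le_self _ (nsmul_nonneg ha n)
  generalize (n • a - u)⁺ = p at *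
  generalize (n • a - u)⁻ = q at *
  have hqp : q * p = 0 := mul_eq_zero_of_inf_eq_zero hf (by rwa [inf_comm])
  have hpa : p * a = 0 := by
    refine le_antisymm ?_ (hpos _ _ hp0 ha)
    have := mul_le_mul_right_of_hpos hpos ha hpn
    rwa [smul_mul_assoc, h, smul_zero] at this
  have hua : u * a = q * a := by
    have : u = n • a - (p - q) := by rw [hd]; abel
    rw [this, sub_mul, sub_mul, hpa, smul_mul_assoc, h, smul_zero]; abel
  -- Multiplying `p - q = n • a - u` by `q` on the left kills `p`.
  have key : n • (q * a) = q * u - q * q := by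
    have : n • a = u + (p - q) := by rw [hd]; abel
    rw [← mul_smul_comm, this, mul_add, mul_sub, hqp]; abel
  rw [hua, key]
  exact (sub_le_self _ (hpos _ _ hq0 hq0)).trans (mul_le_mul_right_of_hpos hpos hu hqu)

/-- A constant lying below the sum of two nets that order-converge to zero is at most zero. -/
theorem le_zero_of_orderConv {A : Type v} [Preorder A] [IsDirected A (· ≤ ·)]
    {g k : A → X} {w : X} (hg : OrderConv g 0) (hk : OrderConv k 0)
    (hw : ∀ a, w ≤ g a + k a) : w ≤ 0 := by
  obtain ⟨B, _, y, _, _, _, _, _, hy, hgy⟩ := hg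
  obtain ⟨C, _, z, _, _, _, _, _, hz, hkz⟩ := hk
  refine hz.2 ?_
  rintro _ ⟨c, rfl⟩
  rw [← sub_nonpos]
  refine hy.2 ?_
  rintro _ ⟨b, rfl⟩
  obtain ⟨a₁, h₁⟩ := hgy b
  obtain ⟨a₂, h₂⟩ := hkz c
  obtain ⟨a, ha₁, ha₂⟩ := exists_ge_ge a₁ a₂
  have e₁ := h₁ a ha₁
  have e₂ := h₂ a ha₂
  rw [sub_zero] at e₁ e₂
  rw [sub_le_iff_le_add]
  exact (hw a).trans (add_le_add ((le_abs_self _).trans e₁) ((le_abs_self _).trans e₂))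

theorem orderConv_of_eq_zero {A : Type v} [Preorder A] [Nonempty A] {g : A → X}
    (hg : ∀ a, g a = 0) : OrderConv g 0 := by
  refine ⟨PUnit, fun _ _ => True, fun _ => 0, ⟨⟨⟩⟩, by simp, by simp, by simp, by simp, ?_, ?_⟩
  · simp
  · simp [hg]

end FAlgebra

/-- In an Archimedean f-algebra `X`, mo-limits are unique (whenever a net
mo-converges to both `x` and `y`, then `x = y`) iff `X` is semiprime
(`x·x = 0` implies `x = 0`). -/
theorem statement13 {X : Type u} [Lattice X] [NonUnitalRing X]
    [CovariantClass X X (· + ·) (· ≤ ·)] [Module ℝ X] [PosSMulMono ℝ X]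
    [IsScalarTower ℝ X X] [SMulCommClass ℝ X X]
    (hpos : ∀ x y : X, 0 ≤ x → 0 ≤ y → 0 ≤ x * y)
    (hf : ∀ x y u : X, x ⊓ y = 0 → 0 ≤ u → (u * x) ⊓ y = 0 ∧ (x * u) ⊓ y = 0)
    (harch : ∀ x y : X, (∀ n : ℕ, 0 ≤ n • x ∧ n • x ≤ y) → x = 0) :
    (∀ (A : Type u) [Preorder A], Nonempty A → IsDirected A (· ≤ ·) →
       ∀ (f : A → X) (x y : X),
         (∀ u : X, 0 ≤ u → OrderConv (fun a => u * |f a - x|) 0) →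
         (∀ u : X, 0 ≤ u → OrderConv (fun a => u * |f a - y|) 0) →
         x = y) ↔
    (∀ x : X, x * x = 0 → x = 0) := by
  constructor
  · intro huniq x hx
    have habs : |x| * |x| = 0 := by rw [abs_mul_abs_eq_mul_self hf, hx]
    refine (huniq PUnit ⟨⟨⟩⟩ inferInstance (fun _ => 0) 0 x ?_ ?_).symm
    · exact fun u _ => orderConv_of_eq_zero fun _ => by simp
    · intro u hu
      refine orderConv_of_eq_zero fun _ => ?_
      rw [zero_sub, abs_neg]
      exact mul_eq_zero_of_mul_self_eq_zero hpos hf harch (abs_nonneg x) hu habs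
  · intro hsemi A _ _ _ f x y hx hy
    have hu := abs_nonneg (x - y)
    have h0 : |x - y| * |x - y| ≤ 0 := by
      refine le_zero_of_orderConv (hx _ hu) (hy _ hu) fun a => ?_
      rw [← mul_add]
      refine mul_le_mul_left_of_hpos hpos hu ?_
      rw [abs_sub_comm (f a) x, ← sub_add_sub_cancel x (f a) y]
      exact abs_add_le _ _
    have h1 := hsemi _ (le_antisymm h0 (hpos _ _ hu hu))
    -- `|z| = 0` forces `z ≤ 0` and `-z ≤ 0`.
    refine le_antisymm (sub_nonpos.1 (h1 ▸ le_abs_self _)) (sub_nonpos.1 ?_)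
    rw [← neg_sub x y]
    exact h1 ▸ neg_le_abs _
end

section
/- Let X be a commutative l-algebra. The following are equivalent: (i) X is a d-algebra (u·(x ⊓ y) = (u·x) ⊓ (u·y) for all u, x, y ∈ X₊) and the multiplication in X is order continuous (for every net x_α →o x and every y ∈ X, y·x_α →o y·x); (ii) for every u ∈ X₊ and every subset A ⊆ X whose infimum inf A exists in X, the infimum of the set u·A := {u·a : a ∈ A} exists in X and inf (u·A) = u·(inf A). -/
/-!
(ii) ⇒ (i): a two-element set gives the d-algebra identity. If `|x a - l| ≤ y b` eventually and
`y` decreases to `0`, then `|z * x a - z * l| ≤ |z| * y b`, and (ii) says that `|z| * y b`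
decreases to `0`.

(i) ⇒ (ii): by translation, multiplication by `u ≥ 0` preserves all binary infima, so a lower bound
`w` of `u·S` is also a lower bound of `u·T`, where `T` is the set of finite infima of `S`
(`infClosure S`). The set `T` is directed downwards and, viewed as a net, order-converges to
`m = inf S`; by order continuity `u·T` order-converges to `u * m`, whence `w ≤ u * m`.
For `S = ∅` the infimum would be a top element, which forces `X` to be trivial.
-/

universe u v

/-- In a d-algebra the distributive law over infima holds without positivity of the entries. -/
lemma mul_inf_of_dalgebra {X : Type u} [Lattice X] [NonUnitalCommRing X]
    [CovariantClass X X (· + ·) (· ≤ ·)]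
    (hd : ∀ u x y : X, 0 ≤ u → 0 ≤ x → 0 ≤ y → u * (x ⊓ y) = (u * x) ⊓ (u * y))
    (u x y : X) (hu : 0 ≤ u) : u * (x ⊓ y) = (u * x) ⊓ (u * y) := by
  have h := hd u (x - x ⊓ y) (y - x ⊓ y) hu (sub_nonneg.2 inf_le_left) (sub_nonneg.2 inf_le_right)
  have e : ∀ a b c : X, (a - c) ⊓ (b - c) = a ⊓ b - c := fun a b c => by
    simp only [sub_eq_add_neg, inf_add]
  rw [mul_sub, mul_sub, e, e, sub_self, mul_zero] at h
  exact (sub_eq_zero.1 h.symm).symm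

lemma mul_mono_of_nonneg {X : Type u} [Lattice X] [NonUnitalCommRing X]
    [CovariantClass X X (· + ·) (· ≤ ·)]
    (hmul : ∀ x y : X, 0 ≤ x → 0 ≤ y → 0 ≤ x * y)
    {u x y : X} (hu : 0 ≤ u) (h : x ≤ y) : u * x ≤ u * y := by
  have := hmul u (y - x) hu (sub_nonneg.2 h)
  rw [mul_sub] at this
  exact sub_nonneg.1 this

lemma abs_mul_le_abs_mul_abs {X : Type u} [Lattice X] [NonUnitalCommRing X]
    [CovariantClass X X (· + ·) (· ≤ ·)]
    (hmul : ∀ x y : X, 0 ≤ x → 0 ≤ y → 0 ≤ x * y) (x y : X) : |x * y| ≤ |x| * |y| := by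
  have key : ∀ z : X, z * y ≤ |z| * |y| := fun z => by
    have h1 : 0 ≤ z⁺ * (|y| - y) := hmul _ _ (posPart_nonneg z) (sub_nonneg.2 (le_abs_self y))
    have h2 : 0 ≤ z⁻ * (|y| + y) :=
      hmul _ _ (negPart_nonneg z) (by
        have := sub_nonneg.2 (neg_le_abs y)
        rwa [sub_neg_eq_add] at this)
    have h3 := add_nonneg h1 h2
    have e : z⁺ * (|y| - y) + z⁻ * (|y| + y) = (z⁺ + z⁻) * |y| - (z⁺ - z⁻) * y := by
      simp only [mul_sub, mul_add, sub_mul, add_mul]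
      abel
    rw [e, posPart_add_negPart, posPart_sub_negPart] at h3
    exact sub_nonneg.1 h3
  refine abs_le'.2 ⟨key x, ?_⟩
  have := key (-x)
  rwa [abs_neg, neg_mul] at this

/-- For a commutative l-algebra `X`, the following are equivalent:
(i) `X` is a d-algebra and the multiplication is order continuous;
(ii) for every `u ∈ X₊` and every `S ⊆ X` whose infimum exists,
`inf (u·S)` exists and equals `u · inf S`. -/
theorem statement15 {X : Type u} [Lattice X] [NonUnitalCommRing X]
    [CovariantClass X X (· + ·) (· ≤ ·)] [Module ℝ X] [PosSMulMono ℝ X]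
    [IsScalarTower ℝ X X] [SMulCommClass ℝ X X]
    (hmul : ∀ x y : X, 0 ≤ x → 0 ≤ y → 0 ≤ x * y) :
    ((∀ u x y : X, 0 ≤ u → 0 ≤ x → 0 ≤ y → u * (x ⊓ y) = (u * x) ⊓ (u * y)) ∧
     (∀ (A : Type u) [Preorder A], Nonempty A → IsDirected A (· ≤ ·) →
        ∀ (x : A → X) (l : X), OrderConv x l →
          ∀ y : X, OrderConv (fun a => y * x a) (y * l))) ↔
    (∀ u : X, 0 ≤ u → ∀ (S : Set X) (m : X), IsGLB S m →
       IsGLB ((fun a => u * a) '' S) (u * m)) := by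
  constructor
  · rintro ⟨hd, hc⟩ u hu S m hm
    refine ⟨?_, fun w hw => ?_⟩
    · rintro _ ⟨a, ha, rfl⟩
      exact mul_mono_of_nonneg hmul hu (hm.1 ha)
    · rcases S.eq_empty_or_nonempty with rfl | ⟨s, hs⟩
      · -- `m` is a top element, so every `x` satisfies `x ≤ 0`, as `x + m ≤ m`.
        have htop : ∀ x : X, x ≤ m := fun x => hm.2 (by simp)
        have h0 : w - u * m ≤ 0 := by
          have := sub_nonneg.2 (htop (w - u * m + m))
          rw [sub_add_cancel_right] at this
          exact neg_nonneg.1 this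
        exact sub_nonpos.1 h0
      · have hwT : ∀ a ∈ infClosure S, w ≤ u * a := by
          intro a ha
          have hcl : InfClosed {a : X | w ≤ u * a} := fun a ha b hb => by
            change w ≤ u * (a ⊓ b)
            rw [mul_inf_of_dalgebra hd u a b hu]
            exact le_inf ha hb
          exact infClosure_min (fun a ha => hw ⟨a, ha, rfl⟩) hcl ha
        have hmT : ∀ a ∈ infClosure S, m ≤ a := fun a ha =>
          infClosure_min (t := Set.Ici m) (fun a ha => hm.1 ha) (fun a ha b hb => le_inf ha hb) ha
        let A := (↥(infClosure S))ᵒᵈ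
        let x : A → X := fun a => (OrderDual.ofDual a : infClosure S).1
        have hA : Nonempty A := ⟨OrderDual.toDual ⟨s, subset_infClosure hs⟩⟩
        have hdir : ∀ a b : A, ∃ c : A, a ≤ c ∧ b ≤ c := fun a b =>
          ⟨OrderDual.toDual ⟨x a ⊓ x b, infClosed_infClosure a.2 b.2⟩,
            (inf_le_left : x a ⊓ x b ≤ x a), (inf_le_right : x a ⊓ x b ≤ x b)⟩
        have hanti : ∀ a b : A, a ≤ b → x b ≤ x a := fun a b h => h
        have hconv : OrderConv x m := by
          refine ⟨A, (· ≤ ·), fun a => x a - m, hA, le_refl, fun _ _ _ => le_trans, hdir,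
            fun a b h => sub_le_sub_right (hanti a b h) m, ⟨?_, fun v hv => ?_⟩,
            fun b => ⟨b, fun a hab => ?_⟩⟩
          · rintro _ ⟨a, rfl⟩
            exact sub_nonneg.2 (hmT _ a.2)
          · have : v + m ≤ m := hm.2 fun a ha =>
              le_sub_iff_add_le.1 (hv ⟨OrderDual.toDual ⟨a, subset_infClosure ha⟩, rfl⟩)
            exact add_le_iff_nonpos_left.1 this
          · rw [abs_of_nonneg (sub_nonneg.2 (hmT (x a) a.2))]
            exact sub_le_sub_right (hanti b a hab) m
        obtain ⟨B, leB, y, -, -, -, -, -, hy, hev⟩ := hc A hA ⟨hdir⟩ x m hconv u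
        have : w - u * m ≤ 0 := hy.2 (by
          rintro _ ⟨b, rfl⟩
          obtain ⟨a, ha⟩ := hev b
          exact (sub_le_sub_right (hwT _ a.2) _).trans ((le_abs_self _).trans (ha a le_rfl)))
        exact sub_nonpos.1 this
  · intro h
    refine ⟨fun u x y hu _ _ => ?_, ?_⟩
    · have h1 := h u hu {x, y} (x ⊓ y) isGLB_pair
      rw [Set.image_pair] at h1
      exact h1.unique isGLB_pair
    · rintro A _ - - x l ⟨B, leB, y, hB, hr, ht, hdir, hanti, hy, hev⟩ z
      refine ⟨B, leB, fun b => |z| * y b, hB, hr, ht, hdir,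
        fun a b hab => mul_mono_of_nonneg hmul (abs_nonneg z) (hanti a b hab), ?_, fun b => ?_⟩
      · have h1 := h |z| (abs_nonneg z) _ 0 hy
        rwa [mul_zero, ← Set.range_comp] at h1
      · obtain ⟨a₀, ha⟩ := hev b
        refine ⟨a₀, fun a haa => ?_⟩
        rw [← mul_sub]
        exact (abs_mul_le_abs_mul_abs hmul _ _).trans
          (mul_mono_of_nonneg hmul (abs_nonneg z) (ha a haa))
end

section
/- Let X be a universally complete f-algebra, i.e., an f-algebra whose underlying Riesz space is Dedekind complete and in which every nonempty pairwise disjoint subset of X₊ has a supremum. Then the algebra multiplication in X is uo-continuous: if a net (x_α)_{α∈A} satisfies x_α →uo x, then y·x_α →uo y·x for every y ∈ X. -/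
/-!
The proof rests on Dedekind completeness. Put `u = |y|`,
`z a = |x a - l|` and `s a = v ⊓ |y * x a - y * l|`, so that `0 ≤ s a ≤ v ⊓ u * z a`.

* `le_zero_of_forall_le_mul`: multiplication by `u ≥ 0` is order continuous at `0`, because it is
  positive and preserves bands and `X` is Archimedean.
* `mul_inf_mul_le`: multiplication by `u` preserves finite infima, so `u * w ⊓ u * z a` is eventually
  dominated by `u * y_b` whenever `w ⊓ z a` is eventually dominated by `y_b ↓ 0`.

The net witnessing `s →o 0` consists of all eventual upper bounds of `s`. If `p ≥ 0` lies below all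
of them, then infinite distributivity (`inf_le_of_isLUB`) and the two facts above give
`p ⊓ u * w = 0` for every `w ≥ 0`. Thus `p` is disjoint from every `s a`, hence from their supremum,
which is itself an eventual upper bound and so lies above `p`. Therefore `p = 0`.
-/

universe u v

/-- Unbounded order (uo-) convergence: `v ⊓ |x_α − l| →o 0` for every `v ∈ X₊`. -/
def UOConv {X : Type u} [Lattice X] [AddCommGroup X] {A : Type v} [Preorder A]
    (x : A → X) (l : X) : Prop :=
  ∀ v : X, 0 ≤ v → OrderConv (fun a => v ⊓ |x a - l|) 0

section LatticeGroup

variable {X : Type u} [Lattice X] [AddCommGroup X] [AddLeftMono X]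

/-- One half of the infinite distributive law `t ⊓ sup S = sup (t ⊓ S)` in an `ℓ`-group. -/
lemma inf_le_of_isLUB {S : Set X} {m t c : X} (hm : IsLUB S m) (h : ∀ s ∈ S, t ⊓ s ≤ c) :
    t ⊓ m ≤ c := by
  -- `s = t ⊓ s + (s - t)⁺`, and the last term is monotone in `s`.
  have key : ∀ s : X, t ⊓ s + (s - t) ⊔ 0 = s := by
    intro s
    have h2 := inf_add_sup t s
    have h3 : (s - t) ⊔ 0 = t ⊔ s - t := by
      rw [sup_sub, sub_self, sup_comm]
    rw [h3, ← add_sub_assoc, h2, add_sub_cancel_left]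
  have hle : m ≤ c + (m - t) ⊔ 0 := by
    refine hm.2 fun s hs => ?_
    calc s = t ⊓ s + (s - t) ⊔ 0 := (key s).symm
      _ ≤ c + (m - t) ⊔ 0 :=
        add_le_add (h s hs) (sup_le_sup_right (sub_le_sub_right (hm.1 hs) t) 0)
  exact le_of_add_le_add_right ((key m).trans_le hle)

lemma inf_add_eq_zero {r a b : X} (hr : 0 ≤ r) (ha : 0 ≤ a) (hb : 0 ≤ b)
    (h₁ : r ⊓ a = 0) (h₂ : r ⊓ b = 0) : r ⊓ (a + b) = 0 := by
  refine le_antisymm ?_ (le_inf hr (add_nonneg ha hb))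
  have h : r ⊓ (a + b) ≤ r ⊓ a + b := by
    rw [inf_add]
    exact inf_le_inf_right _ (le_add_of_nonneg_right hb)
  rw [h₁, zero_add] at h
  exact (le_inf inf_le_left h).trans h₂.le

lemma inf_nsmul_eq_zero {r a : X} (hr : 0 ≤ r) (ha : 0 ≤ a) (h : r ⊓ a = 0) (n : ℕ) :
    r ⊓ n • a = 0 := by
  induction n with
  | zero => simpa using hr
  | succ k ih => rw [succ_nsmul]; exact inf_add_eq_zero hr (nsmul_nonneg ha k) ha ih h

/-- The positive and negative parts of a difference are disjoint. -/
lemma sub_sup_inf_sub_sup (a b : X) : ((a - b) ⊔ 0) ⊓ ((b - a) ⊔ 0) = 0 := by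
  have h₁ : (a - b) ⊔ 0 = a ⊔ b - b := by rw [sup_sub, sub_self]
  have h₂ : (b - a) ⊔ 0 = a ⊔ b - a := by rw [sup_sub, sub_self, sup_comm]
  have h₃ : a ⊔ b - a = b - a ⊓ b := by
    rw [sub_eq_sub_iff_add_eq_add, add_comm, add_comm b a, ← inf_add_sup a b, add_comm]
  have h₄ : a ⊔ b - b = a - a ⊓ b := by
    rw [sub_eq_sub_iff_add_eq_add, add_comm, ← inf_add_sup a b]
  rw [h₁, h₂, h₃, h₄, ← inf_sub, sub_self]

/-- A Dedekind complete `ℓ`-group is Archimedean. -/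
lemma le_zero_of_nsmul_le
    (hDedekind : ∀ S : Set X, S.Nonempty → BddAbove S → ∃ m : X, IsLUB S m)
    {q r : X} (h : ∀ n : ℕ, (n + 1) • q ≤ r) : q ≤ 0 := by
  obtain ⟨m, hm⟩ := hDedekind (Set.range fun n : ℕ => (n + 1) • q) ⟨_, 0, rfl⟩
    ⟨r, by rintro _ ⟨n, rfl⟩; exact h n⟩
  -- `m - q` is again an upper bound.
  have : m ≤ m - q := by
    refine hm.2 ?_
    rintro _ ⟨n, rfl⟩
    have h1 : (n + 1 + 1) • q ≤ m := hm.1 ⟨n + 1, rfl⟩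
    rw [succ_nsmul] at h1
    exact le_sub_iff_add_le.2 h1
  simpa using this

end LatticeGroup

section FAlgebra

variable {X : Type u} [Lattice X] [NonUnitalRing X] [AddLeftMono X]

lemma mul_mono_right_of_nonneg (hpos : ∀ x y : X, 0 ≤ x → 0 ≤ y → 0 ≤ x * y)
    {u a b : X} (hu : 0 ≤ u) (h : a ≤ b) : u * a ≤ u * b := by
  have := hpos u (b - a) hu (sub_nonneg.2 h)
  rwa [mul_sub, sub_nonneg] at this

lemma abs_mul_le_mul_abs (hpos : ∀ x y : X, 0 ≤ x → 0 ≤ y → 0 ≤ x * y) (y z : X) :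
    |y * z| ≤ |y| * |z| := by
  have key : ∀ y : X, y * z ≤ |y| * |z| := by
    intro y
    have h₁ := hpos y⁺ z⁻ (posPart_nonneg y) (negPart_nonneg z)
    have h₂ := hpos y⁻ z⁺ (negPart_nonneg y) (posPart_nonneg z)
    have h₃ : |y| * |z| - y * z = (y⁺ * z⁻ + y⁻ * z⁺) + (y⁺ * z⁻ + y⁻ * z⁺) := by
      rw [← posPart_add_negPart y, ← posPart_add_negPart z]
      nth_rw 3 [← posPart_sub_negPart y]
      nth_rw 3 [← posPart_sub_negPart z]
      noncomm_ring
    rw [← sub_nonneg, h₃]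
    exact add_nonneg (add_nonneg h₁ h₂) (add_nonneg h₁ h₂)
  refine sup_le (key y) ?_
  have := key (-y)
  rwa [neg_mul, abs_neg] at this

/-- Multiplication by a positive element preserves finite infima (the nontrivial inequality). -/
lemma mul_inf_mul_le
    (hf : ∀ x y u : X, x ⊓ y = 0 → 0 ≤ u → (u * x) ⊓ y = 0 ∧ (x * u) ⊓ y = 0)
    {u : X} (hu : 0 ≤ u) (w z : X) : u * w ⊓ u * z ≤ u * (w ⊓ z) := by
  have h₁ : (w - w ⊓ z) ⊓ (z - w ⊓ z) = 0 := by rw [← inf_sub, sub_self]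
  have h₂ := (hf _ _ u h₁ hu).1
  rw [inf_comm] at h₂
  have h₃ := (hf _ _ u h₂ hu).1
  rw [mul_sub, mul_sub, ← inf_sub, sub_eq_zero, inf_comm] at h₃
  exact h₃.le

/-- The band-preserving step behind order continuity: the part of `q` exceeding `u * e` is disjoint
from `e`. -/
lemma sub_mul_sup_inf_eq_zero (hpos : ∀ x y : X, 0 ≤ x → 0 ≤ y → 0 ≤ x * y)
    (hf : ∀ x y u : X, x ⊓ y = 0 → 0 ≤ u → (u * x) ⊓ y = 0 ∧ (x * u) ⊓ y = 0)
    {B : Type*} {y : B → X} (hy : IsGLB (Set.range y) 0) {u q e : X} (hu : 0 ≤ u) (he : 0 ≤ e)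
    (hq : ∀ b, q ≤ u * y b) : ((q - u * e) ⊔ 0) ⊓ e = 0 := by
  have hdisj : ∀ b, ((q - u * e) ⊔ 0) ⊓ ((e - y b) ⊔ 0) ≤ 0 := by
    intro b
    have h₁ : (q - u * e) ⊔ 0 ≤ u * ((y b - e) ⊔ 0) := by
      refine sup_le ?_ (hpos _ _ hu le_sup_right)
      calc q - u * e ≤ u * y b - u * e := sub_le_sub_right (hq b) _
        _ = u * (y b - e) := (mul_sub _ _ _).symm
        _ ≤ _ := mul_mono_right_of_nonneg hpos hu le_sup_left
    exact (inf_le_inf_right _ h₁).trans (hf _ _ u (sub_sup_inf_sub_sup (y b) e) hu).1.le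
  have hlub : IsLUB (Set.range fun b => (e - y b) ⊔ 0) e := by
    constructor
    · rintro _ ⟨b, rfl⟩
      exact sup_le (sub_le_self _ (hy.1 ⟨b, rfl⟩)) he
    · intro c hc
      have : e - c ≤ 0 := by
        refine hy.2 ?_
        rintro _ ⟨b, rfl⟩
        have h := le_sup_left.trans (hc ⟨b, rfl⟩)
        exact sub_le_comm.1 h
      exact sub_nonpos.1 this
  refine le_antisymm (inf_le_of_isLUB hlub ?_) (le_inf le_sup_right he)
  rintro _ ⟨b, rfl⟩
  exact hdisj b

/-- Order continuity at `0` of multiplication by a positive element of a Dedekind complete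
`f`-algebra: if `y` has infimum `0`, then every lower bound of `u * y` is at most `0`. -/
lemma le_zero_of_forall_le_mul [Module ℝ X] [PosSMulMono ℝ X]
    (hpos : ∀ x y : X, 0 ≤ x → 0 ≤ y → 0 ≤ x * y)
    (hf : ∀ x y u : X, x ⊓ y = 0 → 0 ≤ u → (u * x) ⊓ y = 0 ∧ (x * u) ⊓ y = 0)
    (hDedekind : ∀ S : Set X, S.Nonempty → BddAbove S → ∃ m : X, IsLUB S m)
    {B : Type*} [Nonempty B] {y : B → X} (hy : IsGLB (Set.range y) 0) {u q : X} (hu : 0 ≤ u)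
    (hq : ∀ b, q ≤ u * y b) : q ≤ 0 := by
  obtain ⟨b₀⟩ := ‹Nonempty B›
  have hy₀ : 0 ≤ y b₀ := hy.1 ⟨b₀, rfl⟩
  refine le_zero_of_nsmul_le hDedekind (r := u * y b₀) fun n => ?_
  -- It suffices to compare `q` with `u * e`, where `e` is the `(n + 1)`-st part of `y b₀`.
  obtain ⟨e, he, hne⟩ : ∃ e : X, 0 ≤ e ∧ (n + 1) • e = y b₀ := by
    refine ⟨((n + 1 : ℕ) : ℝ)⁻¹ • y b₀, smul_nonneg (by positivity) hy₀, ?_⟩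
    rw [← Nat.cast_smul_eq_nsmul ℝ, smul_smul, mul_inv_cancel₀ (by positivity), one_smul]
  have h₁ := sub_mul_sup_inf_eq_zero hpos hf hy hu he hq
  rw [inf_comm] at h₁
  have h₂ := (hf _ _ u h₁ hu).1
  rw [inf_comm] at h₂
  have h₃ := inf_nsmul_eq_zero le_sup_right (hpos _ _ hu he) h₂ (n + 1)
  rw [← mul_smul_comm, hne] at h₃
  -- `(q - u * e)⁺` is both disjoint from `u * y b₀` and below it, so it vanishes.
  have h₄ : (q - u * e) ⊔ 0 ≤ u * y b₀ :=
    sup_le ((sub_le_self _ (hpos _ _ hu he)).trans (hq b₀)) (hpos _ _ hu hy₀)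
  rw [inf_eq_left.2 h₄] at h₃
  have h₅ : q ≤ u * e := sub_nonpos.1 (le_sup_left.trans h₃.le)
  calc (n + 1) • q ≤ (n + 1) • (u * e) := nsmul_le_nsmul_right h₅ _
    _ = u * y b₀ := by rw [← mul_smul_comm, hne]

end FAlgebra

/-- In a universally complete f-algebra (Dedekind complete, and every nonempty
pairwise disjoint subset of the positive cone has a supremum), the algebra
multiplication is uo-continuous. -/
theorem statement18 {X : Type u} [Lattice X] [NonUnitalRing X]
    [CovariantClass X X (· + ·) (· ≤ ·)] [Module ℝ X] [PosSMulMono ℝ X]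
    [IsScalarTower ℝ X X] [SMulCommClass ℝ X X]
    (hpos : ∀ x y : X, 0 ≤ x → 0 ≤ y → 0 ≤ x * y)
    (hf : ∀ x y u : X, x ⊓ y = 0 → 0 ≤ u → (u * x) ⊓ y = 0 ∧ (x * u) ⊓ y = 0)
    (hDedekind : ∀ S : Set X, S.Nonempty → BddAbove S → ∃ m : X, IsLUB S m)
    (hUniv : ∀ S : Set X, S.Nonempty → (∀ x ∈ S, 0 ≤ x) →
      (∀ x ∈ S, ∀ y ∈ S, x ≠ y → x ⊓ y = 0) → ∃ m : X, IsLUB S m)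
    {A : Type v} [Preorder A] [Nonempty A] (hA : IsDirected A (· ≤ ·))
    (x : A → X) (l : X) (hx : UOConv x l) (y : X) :
    UOConv (fun a => y * x a) (y * l) := by
  have : AddLeftMono X := ‹CovariantClass X X (· + ·) (· ≤ ·)›
  intro v hv
  set s : A → X := fun a => v ⊓ |y * x a - y * l| with hs
  have hs0 : ∀ a, 0 ≤ s a := fun a => le_inf hv (abs_nonneg _)
  have hsv : ∀ a, s a ≤ v := fun a => inf_le_left
  have hu : 0 ≤ |y| := abs_nonneg y
  have hsu : ∀ a, s a ≤ |y| * |x a - l| := fun a => by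
    refine inf_le_right.trans ?_
    rw [← mul_sub]
    exact abs_mul_le_mul_abs hpos _ _
  -- The suprema of the tails of `s`.
  have hsup : ∀ a₀ : A, ∃ c, IsLUB (s '' Set.Ici a₀) c := fun a₀ =>
    hDedekind _ ⟨s a₀, a₀, le_rfl, rfl⟩ ⟨v, by rintro _ ⟨a, -, rfl⟩; exact hsv a⟩
  have hmem : ∀ a₀ c, IsLUB (s '' Set.Ici a₀) c → ∀ a, a₀ ≤ a → s a ≤ c :=
    fun a₀ c hc a ha => hc.1 ⟨a, ha, rfl⟩
  have a₁ : A := Classical.arbitrary A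
  -- Indexing by eventual upper bounds rather than by `A` keeps the index type in `Type u`.
  refine ⟨{c : X // ∃ a₀ : A, ∀ a, a₀ ≤ a → s a ≤ c}, fun c d => d.1 ≤ c.1, Subtype.val,
    ⟨v, a₁, fun a _ => hsv a⟩, fun b => le_rfl, fun _ _ _ h₁ h₂ => h₂.trans h₁, ?_,
    fun _ _ h => h, ?_, ?_⟩
  · rintro ⟨c, a, ha⟩ ⟨d, b, hb⟩
    obtain ⟨e, hae, hbe⟩ := hA.directed a b
    exact ⟨⟨c ⊓ d, e, fun i hi => le_inf (ha i (hae.trans hi)) (hb i (hbe.trans hi))⟩,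
      inf_le_left, inf_le_right⟩
  · have hnn : ∀ c : {c : X // ∃ a₀ : A, ∀ a, a₀ ≤ a → s a ≤ c}, 0 ≤ c.1 := by
      rintro ⟨c, a, ha⟩
      exact (hs0 a).trans (ha a le_rfl)
    refine ⟨by rintro _ ⟨c, rfl⟩; exact hnn c, fun p' hp' => ?_⟩
    -- Replace the lower bound by its positive part, which is a lower bound too.
    set p := p' ⊔ 0 with hp_def
    have hp : ∀ c a₀, (∀ a, a₀ ≤ a → s a ≤ c) → p ≤ c := fun c a₀ h =>
      sup_le (hp' ⟨⟨c, a₀, h⟩, rfl⟩) (hnn ⟨c, a₀, h⟩)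
    have hp0 : 0 ≤ p := le_sup_right
    have hdisj : ∀ w, 0 ≤ w → p ⊓ |y| * w ≤ 0 := by
      intro w hw
      obtain ⟨B, leB, Y, hB, -, -, -, -, hY, hdom⟩ := hx w hw
      refine le_zero_of_forall_le_mul hpos hf hDedekind hY hu fun b => ?_
      obtain ⟨a₀, ha₀⟩ := hdom b
      obtain ⟨c, hc⟩ := hsup a₀
      have hpc : p ≤ c := hp c a₀ (hmem a₀ c hc)
      rw [inf_comm]
      refine (inf_le_inf_left _ hpc).trans (inf_le_of_isLUB hc ?_)
      rintro _ ⟨a, ha, rfl⟩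
      refine (inf_le_inf_left _ (hsu a)).trans ((mul_inf_mul_le hf hu _ _).trans ?_)
      refine mul_mono_right_of_nonneg hpos hu ?_
      have h := ha₀ a ha
      rw [sub_zero] at h
      exact (le_abs_self _).trans h
    obtain ⟨c, hc⟩ := hsup a₁
    have hpc : p ⊓ c ≤ 0 := by
      refine inf_le_of_isLUB hc ?_
      rintro _ ⟨a, -, rfl⟩
      exact (inf_le_inf_left _ (hsu a)).trans (hdisj _ (abs_nonneg _))
    rw [inf_eq_left.2 (hp c a₁ (hmem a₁ c hc))] at hpc
    exact le_sup_left.trans hpc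
  · rintro ⟨c, a₀, h⟩
    refine ⟨a₀, fun a ha => ?_⟩
    have := h a ha
    rw [sub_zero, abs_of_nonneg (hs0 a)]
    exact this
end
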